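/- arXiv:2505.06051 — 2 statements merged into one kernel-verified Lean document; each statement's English description precedes it below -/
import Mathlib

section
/- There exist a constant C > 0 and an integer L₀ ≥ 1 such that for all L ≥ L₀ and all x₀ ∈ Q_{R_L − r_L}, on the event E_{L,x₀}(κ) the following hold: | λ₁(Q_{R_L}, ξ_L) − λ̄_L − Ξ_L(x₀) | ≤ C (d_L/a_L) ( (d_L/a_L)^{1−2κ} |ξ_L(x₀) − a_L| + 1/a_L ), where Ξ_L(x₀) = ξ_L(x₀) + Φ_L(x₀); and ‖ φ_{R_L} − φ̄_L(· − x₀) ‖_{ℓ²(Q_{R_L})} ≤ C (d_L/a_L) √( (d_L/a_L)^{1−2κ} |ξ_L(x₀) − a_L| + 1/a_L ), where φ_{R_L} is the ℓ²-normalised nonnegative principal eigenfunction of Δ + ξ_L on Q_{R_L} with Dirichlet b.c. and φ̄_L is extended by 0 outside Q_{r_L}. -/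
open MeasureTheory ProbabilityTheory Filter Finset

noncomputable section

/-- Euclidean (ℓ²) norm of a point of `ℤ^d`. -/
def znorm {d : ℕ} (x : Fin d → ℤ) : ℝ := Real.sqrt (∑ i, ((x i : ℝ)) ^ 2)

/-- The discrete box `[-a/2, a/2]^d ∩ ℤ^d`. -/
def QBox (d : ℕ) (a : ℝ) : Finset (Fin d → ℤ) :=
  Finset.Icc (fun _ => Int.ceil (-(a / 2))) (fun _ => Int.floor (a / 2))

/-- The translated box `z + ([-a/2, a/2]^d ∩ ℤ^d)`. -/
def QBoxAt {d : ℕ} (a : ℝ) (z : Fin d → ℤ) : Finset (Fin d → ℤ) :=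
  (QBox d a).image (fun x => z + x)

/-- The box `[-1,1]^d ⊂ ℝ^d`. -/
def unitBox (d : ℕ) : Set (Fin d → ℝ) := Set.univ.pi fun _ => Set.Icc (-1) 1

/-- Nearest-neighbour adjacency on `ℤ^d`. -/
def Adj {d : ℕ} (x y : Fin d → ℤ) : Prop := (∑ i, |x i - y i|) = 1

instance {d : ℕ} (x y : Fin d → ℤ) : Decidable (Adj x y) := by
  unfold Adj; infer_instance

/-- `(lam, f)` is an eigenpair of the Anderson Hamiltonian `Δ + V` on `C ⊂ ℤ^d`
with Dirichlet boundary conditions (`f` vanishes outside `C`). -/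
def IsDirichletEigenpair {d : ℕ} (C : Finset (Fin d → ℤ)) (V : (Fin d → ℤ) → ℝ)
    (lam : ℝ) (f : (Fin d → ℤ) → ℝ) : Prop :=
  (∀ x ∉ C, f x = 0) ∧
  ∀ x ∈ C, ((∑ y ∈ C, if Adj x y then f y else 0) - 2 * (d : ℝ) * f x) + V x * f x = lam * f x

/-- `lam` is the largest Dirichlet eigenvalue of `Δ + V` on `C`. -/
def IsTopEigenvalue {d : ℕ} (C : Finset (Fin d → ℤ)) (V : (Fin d → ℤ) → ℝ) (lam : ℝ) : Prop :=
  (∃ f, f ≠ 0 ∧ IsDirichletEigenpair C V lam f) ∧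
  ∀ mu g, g ≠ 0 → IsDirichletEigenpair C V mu g → mu ≤ lam

/-- `(lam, f)` is the principal Dirichlet eigenvalue of `Δ + V` on `C` together with its
ℓ²-normalised nonnegative principal eigenfunction. -/
def IsPrincipalEigenpair {d : ℕ} (C : Finset (Fin d → ℤ)) (V : (Fin d → ℤ) → ℝ)
    (lam : ℝ) (f : (Fin d → ℤ) → ℝ) : Prop :=
  IsDirichletEigenpair C V lam f ∧ (∑ x ∈ C, f x ^ 2) = 1 ∧ (∀ x, 0 ≤ f x) ∧
  ∀ mu g, g ≠ 0 → IsDirichletEigenpair C V mu g → mu ≤ lam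

/-- A complete orthonormal eigenbasis of `Δ + V` on `C` with Dirichlet boundary
conditions, the eigenvalues being listed in nonincreasing order: `lam k` is the
`(k+1)`-th largest eigenvalue (with multiplicity) and `phi k` the associated
normalised eigenfunction. -/
def IsDirichletEigenbasis {d : ℕ} (C : Finset (Fin d → ℤ)) (V : (Fin d → ℤ) → ℝ)
    (lam : ℕ → ℝ) (phi : ℕ → (Fin d → ℤ) → ℝ) : Prop :=
  (∀ k < C.card, IsDirichletEigenpair C V (lam k) (phi k)) ∧
  (∀ j < C.card, ∀ k < C.card, j ≤ k → lam k ≤ lam j) ∧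
  (∀ j < C.card, ∀ k < C.card, (∑ x ∈ C, phi j x * phi k x) = if j = k then 1 else 0)

/-- Covariance of two real random variables. -/
def covar {Ω : Type} [MeasurableSpace Ω] (P : Measure Ω) (X Y : Ω → ℝ) : ℝ :=
  ∫ ω, (X ω - ∫ ω', X ω' ∂P) * (Y ω - ∫ ω', Y ω' ∂P) ∂P

/-- The basic setting of the paper: for each `L`, a centred stationary Gaussian field
`ξ_L` on `ℤ^d` with nonnegative covariance function `v_L`, `v_L(0) = 1`; `d_L` is defined
through `sup_{|x|=1} v_L(x) = 1 − 1/d_L` and `a_L > 0` through `P(ξ_L(0) > a_L) = L^{−d}`. -/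
structure GaussSetting (d : ℕ) (Ω : Type) [MeasurableSpace Ω] where
  P : Measure Ω
  hP : IsProbabilityMeasure P
  ξ : ℕ → Ω → (Fin d → ℤ) → ℝ
  v : ℕ → (Fin d → ℤ) → ℝ
  meas : ∀ L x, Measurable fun ω => ξ L ω x
  v_nonneg : ∀ L x, 0 ≤ v L x
  v_zero : ∀ L, v L 0 = 1
  gaussian : ∀ L, 2 ≤ L → ∀ (s : Finset (Fin d → ℤ)) (c : (Fin d → ℤ) → ℝ),
    Measure.map (fun ω => ∑ x ∈ s, c x * ξ L ω x) P
      = gaussianReal 0 (Real.toNNReal (∑ x ∈ s, ∑ y ∈ s, c x * c y * v L (x - y)))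
  dL : ℕ → ℝ
  dL_pos : ∀ L, 2 ≤ L → 0 < dL L
  dL_def : ∀ L, 2 ≤ L →
    IsGreatest {t : ℝ | ∃ x : Fin d → ℤ, znorm x = 1 ∧ t = v L x} (1 - 1 / dL L)
  aL : ℕ → ℝ
  aL_pos : ∀ L, 2 ≤ L → 0 < aL L
  aL_def : ∀ L, 2 ≤ L →
    P {ω | aL L < ξ L ω 0} = ENNReal.ofReal (1 / (L : ℝ) ^ d)

namespace GaussSetting

variable {d : ℕ} {Ω : Type} [MeasurableSpace Ω] (S : GaussSetting d Ω)

/-- The shape `S_L(x) = a_L (1 − v_L(x))`. -/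
def shape (L : ℕ) (x : Fin d → ℤ) : ℝ := S.aL L * (1 - S.v L x)

/-- Long-range decay assumption (I):
`sup_{|x| ≥ exp(√(ln L))} v_L(x) ln|x| → 0` as `L → ∞`. -/
def LongRangeDecay : Prop :=
  ∀ ε > (0 : ℝ), ∀ᶠ L : ℕ in atTop, ∀ x : Fin d → ℤ,
    Real.exp (Real.sqrt (Real.log L)) ≤ znorm x → S.v L x * Real.log (znorm x) ≤ ε

/-- Short-range decay assumption (II), with constants `c, c' > 0`. -/
def ShortRangeDecay (c c' : ℝ) : Prop :=
  0 < c ∧ 0 < c' ∧ ∀ L, 2 ≤ L → ∀ x : Fin d → ℤ, x ≠ 0 →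
    1 - Real.exp (c' * znorm x) / S.dL L ≤ S.v L x ∧ S.v L x ≤ 1 - c / S.dL L

/-- Assumption 1: `d_L ≪ a_L`. -/
def Assumption1 : Prop := Tendsto (fun L => S.dL L / S.aL L) atTop (nhds 0)

/-- The fluctuation field `ζ_{L,y}(x) = ξ_L(x) − ξ_L(y) v_L(x − y)`. -/
def zeta (L : ℕ) (y x : Fin d → ℤ) (ω : Ω) : ℝ :=
  S.ξ L ω x - S.ξ L ω y * S.v L (x - y)

/-- The field `Φ_L(y) = ∑_{x ∈ Q_{r_L}, x ≠ 0} φ̄_L(x)² ζ_{L,y}(x + y)`. -/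
def Phi (r : ℕ → ℝ) (phiBar : ℕ → (Fin d → ℤ) → ℝ) (L : ℕ) (y : Fin d → ℤ)
    (ω : Ω) : ℝ :=
  ∑ x ∈ (QBox d (r L)).erase 0, phiBar L x ^ 2 * S.zeta L y (x + y) ω

end GaussSetting

/-- The auxiliary mesoscopic data: the scales `r_L, R_L`, the principal eigenpair
`(λ̄_L, φ̄_L)` of `Δ − S_L` on `Q_{r_L}` and `τ_L` with `τ_L² = Var(Φ_L(0))`. -/
structure MesoData {d : ℕ} {Ω : Type} [MeasurableSpace Ω] (S : GaussSetting d Ω) where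
  rL : ℕ → ℝ
  RL : ℕ → ℝ
  lamBar : ℕ → ℝ
  phiBar : ℕ → (Fin d → ℤ) → ℝ
  tau : ℕ → ℝ
  rL_lower : ∀ L, 2 ≤ L → Real.log (S.aL L) ≤ Real.log (rL L)
  rL_upper : Tendsto (fun L => Real.log (rL L) / Real.sqrt (S.aL L)) atTop (nhds 0)
  RL_lower : Tendsto (fun L => S.aL L / Real.log (RL L)) atTop (nhds 0)
  RL_upper : Tendsto (fun L => Real.log (RL L) / (S.aL L * (S.aL L / S.dL L))) atTop (nhds 0)
  principal : ∀ L, 2 ≤ L →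
    IsPrincipalEigenpair (QBox d (rL L)) (fun x => -(S.shape L x)) (lamBar L) (phiBar L)
  tau_nonneg : ∀ L, 0 ≤ tau L
  tau_def : ∀ L, 2 ≤ L → tau L ^ 2 = variance (S.Phi rL phiBar L 0) S.P

/-- Assumption 2: `τ_L ≪ a_L^{-1} (a_L/d_L)^{1/2}`. -/
def Assumption2 {d : ℕ} {Ω : Type} [MeasurableSpace Ω] (S : GaussSetting d Ω)
    (M : MesoData S) : Prop :=
  Tendsto (fun L => S.aL L * M.tau L * Real.sqrt (S.dL L / S.aL L)) atTop (nhds 0)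

/-- The event `E¹_{L,x₀} = {|ξ_L(x₀) − a_L| < θ}`, `θ = 2d+1`. -/
def EventE1 {d : ℕ} {Ω : Type} [MeasurableSpace Ω] (S : GaussSetting d Ω) (L : ℕ)
    (x₀ : Fin d → ℤ) : Set Ω :=
  {ω | |S.ξ L ω x₀ - S.aL L| < 2 * (d : ℝ) + 1}

/-- The event `E²_{L,x₀} = {|ζ_{L,x₀}(x)| ≤ S_L(x−x₀)/10, ∀ x ∈ Q_{2R_L,x₀}}`. -/
def EventE2 {d : ℕ} {Ω : Type} [MeasurableSpace Ω] (S : GaussSetting d Ω) (RL : ℕ → ℝ)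
    (L : ℕ) (x₀ : Fin d → ℤ) : Set Ω :=
  {ω | ∀ x ∈ QBoxAt (2 * RL L) x₀, |S.zeta L x₀ x ω| ≤ S.shape L (x - x₀) / 10}

/-- The event `E³_{L,x₀}` controlling the fluctuation field on `Q_{R_L,x₀}`. -/
def EventE3 {d : ℕ} {Ω : Type} [MeasurableSpace Ω] (S : GaussSetting d Ω) (RL : ℕ → ℝ)
    (κ : ℝ) (L : ℕ) (x₀ : Fin d → ℤ) : Set Ω :=
  {ω | ∀ x ∈ QBoxAt (RL L) x₀, x ≠ x₀ →
    |S.zeta L x₀ x ω| ≤ Real.sqrt (variance (S.zeta L x₀ x) S.P) *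
      (S.aL L / S.dL L) ^ (κ * znorm (x - x₀)) *
      Real.sqrt (max 1 (|S.ξ L ω x₀ - S.aL L| * S.aL L))}

/-- The event `E_{L,x₀} = E¹ ∩ E² ∩ E³`. -/
def EventE {d : ℕ} {Ω : Type} [MeasurableSpace Ω] (S : GaussSetting d Ω) (RL : ℕ → ℝ)
    (κ : ℝ) (L : ℕ) (x₀ : Fin d → ℤ) : Set Ω :=
  EventE1 S L x₀ ∩ EventE2 S RL L x₀ ∩ EventE3 S RL κ L x₀

end

noncomputable section

namespace Meso

/-- The `ℓ¹` norm on `ℤ^d`. -/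
def n1 {d : ℕ} (x : Fin d → ℤ) : ℕ := ∑ i, (x i).natAbs

/-- The operator `Δ + V` on `C`. -/
def op {d : ℕ} (C : Finset (Fin d → ℤ)) (V f : (Fin d → ℤ) → ℝ) (x : Fin d → ℤ) : ℝ :=
  ((∑ y ∈ C, if Adj x y then f y else 0) - 2 * (d : ℝ) * f x) + V x * f x

lemma adj_symm {d : ℕ} (x y : Fin d → ℤ) : Adj x y ↔ Adj y x := by
  unfold Adj
  simp_rw [fun i => abs_sub_comm (x i) (y i)]

lemma adj_sub {d : ℕ} (x y z : Fin d → ℤ) : Adj (x - z) (y - z) ↔ Adj x y := by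
  unfold Adj
  simp

lemma n1_cast {d : ℕ} (x : Fin d → ℤ) : (n1 x : ℤ) = ∑ i, |x i| := by
  unfold n1
  push_cast
  rfl

lemma n1_eq_zero {d : ℕ} (x : Fin d → ℤ) : n1 x = 0 ↔ x = 0 := by
  unfold n1
  simp [funext_iff]

lemma n1_adj {d : ℕ} {x y : Fin d → ℤ} (h : Adj x y) : n1 x ≤ n1 y + 1 := by
  have h1 : (n1 x : ℤ) ≤ n1 y + 1 := by
    rw [n1_cast, n1_cast, ← h, ← sum_add_distrib]
    apply sum_le_sum
    intro i _
    have := abs_sub_abs_le_abs_sub (x i) (y i)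
    linarith
  exact_mod_cast h1

lemma znorm_le_n1 {d : ℕ} (x : Fin d → ℤ) : znorm x ≤ n1 x := by
  unfold znorm
  have h0 : ((n1 x : ℕ) : ℝ) = ∑ i, |(x i : ℝ)| := by
    have := n1_cast x
    have h2 : ((n1 x : ℤ) : ℝ) = ((∑ i, |x i| : ℤ) : ℝ) := by rw [this]
    push_cast at h2
    exact h2
  rw [h0]
  apply Real.sqrt_le_iff.2
  refine ⟨sum_nonneg fun i _ => abs_nonneg _, ?_⟩
  calc ∑ i, (x i : ℝ) ^ 2 = ∑ i, |(x i : ℝ)| ^ 2 := by simp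
    _ ≤ _ := sum_sq_le_sq_sum_of_nonneg fun i _ => abs_nonneg _

lemma adj_form {d : ℕ} {x y : Fin d → ℤ} (h : Adj x y) :
    ∃ i, ∃ b : Bool, y = x + Pi.single i (if b then 1 else -1) := by
  have h' : ∑ i, |x i - y i| = 1 := h
  have : ∃ i, x i - y i ≠ 0 := by
    by_contra hc
    push Not at hc
    simp [hc] at h'
  obtain ⟨i, hi⟩ := this
  rw [← add_sum_erase _ _ (mem_univ i)] at h'
  have h1 : 1 ≤ |x i - y i| := Int.one_le_abs hi
  have h2 : 0 ≤ ∑ j ∈ univ.erase i, |x j - y j| := sum_nonneg fun _ _ => abs_nonneg _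
  have h3 : ∑ j ∈ univ.erase i, |x j - y j| = 0 := by linarith
  have h4 : |x i - y i| = 1 := by linarith
  rw [sum_eq_zero_iff_of_nonneg (fun _ _ => abs_nonneg _)] at h3
  refine ⟨i, decide (y i = x i + 1), ?_⟩
  funext j
  by_cases hj : j = i
  · subst hj
    rcases abs_eq (by norm_num : (0:ℤ) ≤ 1) |>.1 h4 with h5 | h5
    · have : y j ≠ x j + 1 := by lia
      simp [this]; lia
    · have : y j = x j + 1 := by lia
      simp [this]
  · have := h3 j (by simp [hj])
    have := abs_eq_zero.1 this
    simp [hj]; lia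

lemma card_adj {d : ℕ} (C : Finset (Fin d → ℤ)) (x : Fin d → ℤ) :
    ((C.filter (Adj x)).card : ℝ) ≤ 2 * d := by
  have h : C.filter (Adj x) ⊆ (univ : Finset (Fin d × Bool)).image
      (fun p => x + Pi.single p.1 (if p.2 then (1:ℤ) else -1)) := by
    intro y hy
    obtain ⟨i, b, hb⟩ := adj_form (mem_filter.1 hy).2
    exact mem_image.2 ⟨(i, b), mem_univ _, hb.symm⟩
  have h2 := (card_le_card h).trans card_image_le
  have h3 : (univ : Finset (Fin d × Bool)).card = 2 * d := by simp [mul_comm]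
  rw [h3] at h2
  exact_mod_cast h2

lemma nsum_le {d : ℕ} (C : Finset (Fin d → ℤ)) (x : Fin d → ℤ) (f : (Fin d → ℤ) → ℝ) (B : ℝ)
    (hB : 0 ≤ B) (hf : ∀ y, Adj x y → f y ≤ B) :
    (∑ y ∈ C, if Adj x y then f y else 0) ≤ 2 * d * B := by
  rw [← sum_filter]
  calc ∑ y ∈ C.filter (Adj x), f y ≤ ∑ y ∈ C.filter (Adj x), B :=
        sum_le_sum fun y hy => hf y (mem_filter.1 hy).2
    _ = (C.filter (Adj x)).card * B := by simp
    _ ≤ _ := mul_le_mul_of_nonneg_right (card_adj C x) hB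

lemma op_symm {d : ℕ} (C : Finset (Fin d → ℤ)) (V f g : (Fin d → ℤ) → ℝ) :
    ∑ x ∈ C, f x * op C V g x = ∑ x ∈ C, g x * op C V f x := by
  have h : ∑ x ∈ C, f x * (∑ y ∈ C, if Adj x y then g y else 0)
      = ∑ x ∈ C, g x * (∑ y ∈ C, if Adj x y then f y else 0) := by
    simp_rw [mul_sum]
    rw [sum_comm]
    apply sum_congr rfl; intro x _
    apply sum_congr rfl; intro y _
    simp only [adj_symm y x]
    split_ifs <;> ring
  unfold op
  have e1 : ∀ f g : (Fin d → ℤ) → ℝ, ∑ x ∈ C, f x * (((∑ y ∈ C, if Adj x y then g y else 0)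
      - 2 * (d : ℝ) * g x) + V x * g x) = ∑ x ∈ C, f x * (∑ y ∈ C, if Adj x y then g y else 0)
      + ∑ x ∈ C, f x * g x * (V x - 2 * d) := by
    intro f g
    rw [← sum_add_distrib]
    apply sum_congr rfl; intro x _; ring
  rw [e1, e1, h]
  congr 1
  apply sum_congr rfl; intro x _; ring

lemma op_quad {d : ℕ} (C : Finset (Fin d → ℤ)) (V f : (Fin d → ℤ) → ℝ) :
    ∑ x ∈ C, f x * op C V f x ≤ ∑ x ∈ C, V x * f x ^ 2 := by
  have h : ∑ x ∈ C, f x * (∑ y ∈ C, if Adj x y then f y else 0) ≤ ∑ x ∈ C, 2 * d * f x ^ 2 := by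
    have h1 : ∑ x ∈ C, f x * (∑ y ∈ C, if Adj x y then f y else 0)
        ≤ ∑ x ∈ C, ∑ y ∈ C, ((if Adj x y then f x ^ 2 / 2 else 0)
          + (if Adj x y then f y ^ 2 / 2 else 0)) := by
      apply sum_le_sum; intro x _
      rw [mul_sum]
      apply sum_le_sum; intro y _
      split_ifs
      · nlinarith [sq_nonneg (f x - f y)]
      · simp
    have h2 : ∑ x ∈ C, ∑ y ∈ C, (if Adj x y then f y ^ 2 / 2 else 0)
        = ∑ x ∈ C, ∑ y ∈ C, (if Adj x y then f x ^ 2 / 2 else 0) := by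
      rw [sum_comm]
      apply sum_congr rfl; intro x _
      apply sum_congr rfl; intro y _
      simp only [adj_symm y x]
    simp_rw [sum_add_distrib] at h1
    rw [h2] at h1
    refine h1.trans ?_
    rw [← sum_add_distrib]
    apply sum_le_sum; intro x _
    have := nsum_le C x (fun _ => f x ^ 2 / 2) (f x ^ 2 / 2) (by positivity) (fun _ _ => le_rfl)
    linarith
  have e : ∑ x ∈ C, f x * op C V f x = ∑ x ∈ C, f x * (∑ y ∈ C, if Adj x y then f y else 0)
      - ∑ x ∈ C, 2 * d * f x ^ 2 + ∑ x ∈ C, V x * f x ^ 2 := by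
    rw [← sum_sub_distrib, ← sum_add_distrib]
    apply sum_congr rfl; intro x _
    unfold op; ring
  rw [e]; linarith

lemma op_sub_smul {d : ℕ} (C : Finset (Fin d → ℤ)) (V f g : (Fin d → ℤ) → ℝ) (t : ℝ) (x) :
    op C V (fun x => f x - t * g x) x = op C V f x - t * op C V g x := by
  have : (∑ y ∈ C, if Adj x y then f y - t * g y else 0)
    = (∑ y ∈ C, if Adj x y then f y else 0) - t * (∑ y ∈ C, if Adj x y then g y else 0) := by
    rw [mul_sum, ← sum_sub_distrib]
    apply sum_congr rfl; intro y _
    split_ifs <;> simp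
  unfold op
  rw [this]; ring

/-- Abstract perturbation lemma. -/
lemma core {d : ℕ} (C : Finset (Fin d → ℤ)) (V phi psi r : (Fin d → ℤ) → ℝ) (lam nu g : ℝ)
    (hphi : ∀ x ∈ C, op C V phi x = lam * phi x) (hphi1 : ∑ x ∈ C, phi x ^ 2 = 1)
    (hphi0 : ∀ x, 0 ≤ phi x) (hpsi1 : ∑ x ∈ C, psi x ^ 2 = 1) (hpsi0 : ∀ x, 0 ≤ psi x)
    (hr : ∀ x ∈ C, op C V psi x = nu * psi x + r x) (hg : 0 < g)
    (hgap : ∀ u : (Fin d → ℤ) → ℝ, ∑ x ∈ C, u x * psi x = 0 →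
      ∑ x ∈ C, u x * op C V u x ≤ (lam - g) * ∑ x ∈ C, u x ^ 2) :
    |lam - nu - ∑ x ∈ C, r x * psi x| ≤ (∑ x ∈ C, r x ^ 2) / g ∧
    ∑ x ∈ C, (phi x - psi x) ^ 2 ≤ 2 * (∑ x ∈ C, r x ^ 2) / g ^ 2 := by
  set R := ∑ x ∈ C, r x ^ 2 with hR
  have hR0 : 0 ≤ R := sum_nonneg fun _ _ => sq_nonneg _
  obtain ⟨α, hα⟩ : ∃ α, α = ∑ x ∈ C, phi x * psi x := ⟨_, rfl⟩
  have hα0 : 0 ≤ α := hα ▸ sum_nonneg fun x _ => mul_nonneg (hphi0 x) (hpsi0 x)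
  let u : (Fin d → ℤ) → ℝ := fun x => phi x - α * psi x
  have hu1 : ∑ x ∈ C, u x * psi x = 0 := by
    have : ∑ x ∈ C, u x * psi x = ∑ x ∈ C, phi x * psi x - α * ∑ x ∈ C, psi x ^ 2 := by
      rw [mul_sum, ← sum_sub_distrib]
      apply sum_congr rfl; intro x _; simp only [u]; ring
    rw [this, hpsi1, ← hα]; ring
  have hu2 : ∑ x ∈ C, u x ^ 2 = 1 - α ^ 2 := by
    have : ∑ x ∈ C, u x ^ 2 = ∑ x ∈ C, phi x ^ 2 - 2 * α * ∑ x ∈ C, phi x * psi x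
        + α ^ 2 * ∑ x ∈ C, psi x ^ 2 := by
      rw [mul_sum, mul_sum, ← sum_sub_distrib, ← sum_add_distrib]
      apply sum_congr rfl; intro x _; simp only [u]; ring
    rw [this, hpsi1, hphi1, ← hα]; ring
  set ρ := ∑ x ∈ C, u x * r x with hρ
  have hCS : ρ ^ 2 ≤ (1 - α ^ 2) * R := by
    rw [← hu2]; exact sum_mul_sq_le_sq_mul_sq C u r
  have huphi : ∑ x ∈ C, u x * phi x = 1 - α ^ 2 := by
    have : ∑ x ∈ C, u x * phi x = ∑ x ∈ C, phi x ^ 2 - α * ∑ x ∈ C, phi x * psi x := by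
      rw [mul_sum, ← sum_sub_distrib]
      apply sum_congr rfl; intro x _; simp only [u]; ring
    rw [this, hphi1, ← hα]; ring
  have hquad : ∑ x ∈ C, u x * op C V u x = lam * (1 - α ^ 2) - α * ρ := by
    have : ∑ x ∈ C, u x * op C V u x = lam * ∑ x ∈ C, u x * phi x
        - α * nu * ∑ x ∈ C, u x * psi x - α * ∑ x ∈ C, u x * r x := by
      rw [mul_sum, mul_sum, mul_sum, ← sum_sub_distrib, ← sum_sub_distrib]
      apply sum_congr rfl; intro x hx
      have : op C V u x = op C V phi x - α * op C V psi x := op_sub_smul C V phi psi α x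
      rw [this, hphi x hx, hr x hx]; ring
    rw [this, hu1, huphi]; ring
  have hG := hgap u hu1
  rw [hquad, hu2] at hG
  have hU0 : 0 ≤ 1 - α ^ 2 := by rw [← hu2]; exact sum_nonneg fun _ _ => sq_nonneg _
  have hG' : g * (1 - α ^ 2) ≤ α * ρ := by linarith
  have hkey : g ^ 2 * (1 - α ^ 2) ≤ α ^ 2 * R := by
    rcases hU0.eq_or_lt with h | h
    · rw [← h]; simp; positivity
    · have h1 : (g * (1 - α ^ 2)) ^ 2 ≤ (α * ρ) ^ 2 := by
        apply pow_le_pow_left₀ (by positivity) hG'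
      have h2 : (α * ρ) ^ 2 ≤ α ^ 2 * ((1 - α ^ 2) * R) := by
        rw [mul_pow]; exact mul_le_mul_of_nonneg_left hCS (sq_nonneg _)
      have h3 : (g ^ 2 * (1 - α ^ 2)) * (1 - α ^ 2) ≤ (α ^ 2 * R) * (1 - α ^ 2) := by
        nlinarith
      exact le_of_mul_le_mul_right h3 h
  have hαpos : 0 < α := by
    rcases hα0.eq_or_lt with h | h
    · rw [← h] at hkey; simp at hkey; nlinarith
    · exact h
  have hα1 : α ≤ 1 := by nlinarith
  constructor
  · have hsym := op_symm C V psi phi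
    have h1 : ∑ x ∈ C, psi x * op C V phi x = lam * α := by
      rw [hα, mul_sum]; apply sum_congr rfl; intro x hx; rw [hphi x hx]; ring
    have h2 : ∑ x ∈ C, phi x * op C V psi x
        = nu * ∑ x ∈ C, phi x * psi x + (α * ∑ x ∈ C, r x * psi x + ρ) := by
      rw [hρ, mul_sum, mul_sum, ← sum_add_distrib, ← sum_add_distrib]
      apply sum_congr rfl; intro x hx; rw [hr x hx]; simp only [u]; ring
    rw [h1, h2, ← hα] at hsym
    have h3 : α * (lam - nu - ∑ x ∈ C, r x * psi x) = ρ := by linarith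
    have h4 : (g * ρ) ^ 2 ≤ (α * R) ^ 2 := by
      have := mul_le_mul_of_nonneg_right hkey hR0
      nlinarith [mul_le_mul_of_nonneg_left hCS (sq_nonneg g)]
    have h5 : |g * ρ| ≤ α * R := abs_le_of_sq_le_sq h4 (by positivity)
    rw [← h3, abs_mul, abs_mul, abs_of_pos hg, abs_of_pos hαpos] at h5
    rw [le_div_iff₀ hg]
    have : α * (|lam - nu - ∑ x ∈ C, r x * psi x| * g) ≤ α * R := by linarith
    exact le_of_mul_le_mul_left this hαpos
  · have h1 : ∑ x ∈ C, (phi x - psi x) ^ 2 = 2 - 2 * α := by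
      have : ∑ x ∈ C, (phi x - psi x) ^ 2 = ∑ x ∈ C, phi x ^ 2 - 2 * ∑ x ∈ C, phi x * psi x
        + ∑ x ∈ C, psi x ^ 2 := by
        rw [mul_sum, ← sum_sub_distrib, ← sum_add_distrib]
        apply sum_congr rfl; intro x _; ring
      rw [this, hpsi1, hphi1, ← hα]; ring
    rw [h1, le_div_iff₀ (by positivity)]
    have : (2 - 2 * α) ≤ 2 * (1 - α ^ 2) := by nlinarith
    have h2 : α ^ 2 * R ≤ R := by
      have : α ^ 2 ≤ 1 := by linarith
      nlinarith
    nlinarith [mul_le_mul_of_nonneg_right this (sq_nonneg g)]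

lemma mem_QBox {d : ℕ} {a : ℝ} {x : Fin d → ℤ} :
    x ∈ QBox d a ↔ ∀ i, |(x i : ℝ)| ≤ a / 2 := by
  unfold QBox
  rw [Finset.mem_Icc, Pi.le_def, Pi.le_def, ← forall_and]
  apply forall_congr'; intro i
  rw [Int.ceil_le, Int.le_floor, abs_le]

lemma mem_QBoxAt {d : ℕ} {a : ℝ} {x z : Fin d → ℤ} :
    x ∈ QBoxAt a z ↔ x - z ∈ QBox d a := by
  unfold QBoxAt
  rw [mem_image]
  constructor
  · rintro ⟨y, hy, rfl⟩; simpa using hy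
  · intro h; exact ⟨x - z, h, by simp⟩

/-- Moving one step towards `x₀` inside the box. -/
lemma step {d : ℕ} {a : ℝ} {x₀ y : Fin d → ℤ} (hx : x₀ ∈ QBox d a) (hy : y ∈ QBox d a)
    {n : ℕ} (hn : n1 (y - x₀) = n + 1) :
    ∃ z ∈ QBox d a, Adj z y ∧ n1 (z - x₀) = n := by
  have : ∃ i, y i ≠ x₀ i := by
    by_contra hc
    push Not at hc
    have : y - x₀ = 0 := by funext i; simp [hc]
    rw [(n1_eq_zero _).2 this] at hn
    omega
  obtain ⟨i, hi⟩ := this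
  let t : ℤ := if y i < x₀ i then y i + 1 else y i - 1
  refine ⟨Function.update y i t, ?_, ?_, ?_⟩
  · rw [mem_QBox] at *
    intro j
    by_cases hj : j = i
    · subst hj
      have h1 := abs_le.1 (hx j)
      have h2 := abs_le.1 (hy j)
      simp only [Function.update_self, t]
      rw [abs_le]
      split_ifs with h
      · have h3 : (y j : ℝ) + 1 ≤ x₀ j := by exact_mod_cast h
        push_cast
        constructor <;> linarith
      · have h3 : (x₀ j : ℝ) + 1 ≤ y j := by
          have : x₀ j + 1 ≤ y j := by lia
          exact_mod_cast this
        push_cast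
        constructor <;> linarith
    · simp [hj, hy j]
  · unfold Adj
    rw [← add_sum_erase _ _ (mem_univ i), sum_eq_zero]
    · simp only [Function.update_self, t]
      split_ifs <;> simp
    · intro j hj
      simp [(mem_erase.1 hj).1]
  · unfold n1 at *
    rw [← add_sum_erase _ _ (mem_univ i)] at hn ⊢
    have : ∑ j ∈ univ.erase i, ((Function.update y i t - x₀) j).natAbs
        = ∑ j ∈ univ.erase i, ((y - x₀) j).natAbs := by
      apply sum_congr rfl; intro j hj; simp [(mem_erase.1 hj).1]
    rw [this]
    simp only [Pi.sub_apply, Function.update_self, t] at hn ⊢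
    split_ifs <;> omega

lemma pos_of_principal {d : ℕ} {a : ℝ} {V f : (Fin d → ℤ) → ℝ} {lam : ℝ}
    (h : IsPrincipalEigenpair (QBox d a) V lam f) {x₀ : Fin d → ℤ} (hx : x₀ ∈ QBox d a) :
    0 < f x₀ := by
  obtain ⟨⟨_, he⟩, h1, h0, _⟩ := h
  by_contra hc
  have hz : f x₀ = 0 := le_antisymm (not_lt.1 hc) (h0 _)
  have key : ∀ n : ℕ, ∀ y ∈ QBox d a, n1 (y - x₀) = n → f y = 0 := by
    intro n
    induction n with
    | zero =>
      intro y _ hn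
      rw [n1_eq_zero, sub_eq_zero] at hn
      rw [hn, hz]
    | succ n ih =>
      intro y hy hn
      obtain ⟨z, hzC, hadj, hzn⟩ := step hx hy hn
      have hfz := ih z hzC hzn
      have e := he z hzC
      rw [hfz] at e
      simp only [mul_zero, sub_zero, add_zero] at e
      rw [sum_eq_zero_iff_of_nonneg (fun w _ => by split_ifs <;> simp [h0])] at e
      simpa [hadj] using e y hy
  rw [sum_eq_zero (fun y hy => by rw [key _ y hy rfl]; simp)] at h1
  norm_num at h1

lemma lam_ge {d : ℕ} {a : ℝ} {V f : (Fin d → ℤ) → ℝ} {lam : ℝ}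
    (h : IsPrincipalEigenpair (QBox d a) V lam f) {x₀ : Fin d → ℤ} (hx : x₀ ∈ QBox d a) :
    V x₀ - 2 * d ≤ lam := by
  have hp := pos_of_principal h hx
  obtain ⟨⟨_, he⟩, h1, h0, _⟩ := h
  have e := he x₀ hx
  have : 0 ≤ ∑ y ∈ QBox d a, if Adj x₀ y then f y else 0 :=
    sum_nonneg fun w _ => by split_ifs <;> simp [h0]
  have : (V x₀ - 2 * d) * f x₀ ≤ lam * f x₀ := by linarith
  exact le_of_mul_le_mul_right this hp

lemma decay {d : ℕ} {C : Finset (Fin d → ℤ)} {S f : (Fin d → ℤ) → ℝ} {lam k : ℝ} (hk : 0 < k)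
    (he : IsDirichletEigenpair C (fun x => -(S x)) lam f) (h0 : ∀ x, 0 ≤ f x)
    (h1 : ∑ x ∈ C, f x ^ 2 = 1) (hl : -(2 * (d : ℝ)) ≤ lam) (hS : ∀ x, x ≠ 0 → k ≤ S x) :
    ∀ n : ℕ, ∀ x, n ≤ n1 x → f x ≤ (2 * d / k) ^ n := by
  have hle : ∀ x, f x ≤ 1 := by
    intro x
    by_cases hx : x ∈ C
    · have := single_le_sum (f := fun x => f x ^ 2) (fun _ _ => sq_nonneg _) hx
      rw [h1] at this
      nlinarith [h0 x]
    · rw [he.1 x hx]; norm_num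
  intro n
  induction n with
  | zero => intro x _; simpa using hle x
  | succ n ih =>
    intro x hx
    by_cases hxC : x ∈ C
    · have hx0 : x ≠ 0 := by
        intro h; rw [(n1_eq_zero x).2 h] at hx; omega
      have e := he.2 x hxC
      have hn := nsum_le C x f ((2 * d / k) ^ n) (by positivity) (fun y hy => ih y (by
        have := n1_adj hy; omega))
      have := hS x hx0
      have h2 : k * f x ≤ 2 * d * (2 * d / k) ^ n := by
        nlinarith [h0 x, mul_nonneg (h0 x) (sub_nonneg.2 this), mul_nonneg (h0 x) (by linarith : 0 ≤ lam + 2 * d)]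
      rw [pow_succ', div_mul_eq_mul_div, le_div_iff₀ hk]
      linarith
    · rw [he.1 x hxC]; positivity

/-- Companion of `decay` with the shape included. -/
lemma decayS {d : ℕ} {C : Finset (Fin d → ℤ)} {S f : (Fin d → ℤ) → ℝ} {lam k : ℝ} (hk : 0 < k)
    (he : IsDirichletEigenpair C (fun x => -(S x)) lam f) (h0 : ∀ x, 0 ≤ f x)
    (h1 : ∑ x ∈ C, f x ^ 2 = 1) (hl : -(2 * (d : ℝ)) ≤ lam) (hS : ∀ x, x ≠ 0 → k ≤ S x)
    (n : ℕ) (x) (hx : n1 x = n + 1) : S x * f x ≤ 2 * d * (2 * d / k) ^ n := by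
  by_cases hxC : x ∈ C
  · have e := he.2 x hxC
    have hn := nsum_le C x f ((2 * d / k) ^ n) (by positivity)
      (fun y hy => decay hk he h0 h1 hl hS n y (by have := n1_adj hy; omega))
    nlinarith [h0 x, mul_nonneg (h0 x) (by linarith : 0 ≤ lam + 2 * d)]
  · rw [he.1 x hxC]; simp; positivity

lemma half_pow_int (N : ℕ) : ∑ k ∈ Finset.Icc (-(N : ℤ)) N, (1 / 2 : ℝ) ^ k.natAbs
    = 3 - 2 * (1 / 2) ^ N := by
  induction N with
  | zero => simp; norm_num
  | succ N ih =>
    have : Finset.Icc (-((N + 1 : ℕ) : ℤ)) ((N + 1 : ℕ) : ℤ)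
        = insert (-((N : ℤ) + 1)) (insert ((N : ℤ) + 1) (Finset.Icc (-(N : ℤ)) N)) := by
      ext k; simp only [Finset.mem_Icc, Finset.mem_insert]; push_cast; lia
    rw [this, sum_insert, sum_insert, ih]
    · have e1 : (-((N : ℤ) + 1)).natAbs = N + 1 := by omega
      have e2 : ((N : ℤ) + 1).natAbs = N + 1 := by omega
      rw [e1, e2]; ring
    · simp
    · simp only [Finset.mem_insert, Finset.mem_Icc]; lia

lemma half_pow_sum {d : ℕ} (s : Finset (Fin d → ℤ)) : ∑ x ∈ s, (1 / 2 : ℝ) ^ n1 x ≤ 3 ^ d := by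
  let N : ℕ := s.sup n1
  have hsub : s ⊆ Fintype.piFinset (fun _ : Fin d => Finset.Icc (-(N : ℤ)) N) := by
    intro x hx
    rw [Fintype.mem_piFinset]
    intro i
    have h1 : n1 x ≤ N := le_sup (f := n1) hx
    have h2 : (x i).natAbs ≤ n1 x := single_le_sum (f := fun i => (x i).natAbs) (fun _ _ => Nat.zero_le _) (mem_univ i)
    rw [Finset.mem_Icc]; omega
  calc ∑ x ∈ s, (1 / 2 : ℝ) ^ n1 x ≤ ∑ x ∈ Fintype.piFinset (fun _ : Fin d => Finset.Icc (-(N : ℤ)) N), (1 / 2 : ℝ) ^ n1 x :=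
        sum_le_sum_of_subset_of_nonneg hsub fun _ _ _ => by positivity
    _ = ∏ i : Fin d, ∑ k ∈ Finset.Icc (-(N : ℤ)) N, (1 / 2 : ℝ) ^ k.natAbs := by
        rw [prod_univ_sum]
        apply sum_congr rfl; intro x _
        unfold n1
        rw [prod_pow_eq_pow_sum]
    _ = (3 - 2 * (1 / 2) ^ N) ^ d := by rw [half_pow_int]; simp
    _ ≤ 3 ^ d := by
        apply pow_le_pow_left₀
        · have : (1 / 2 : ℝ) ^ N ≤ 1 := pow_le_one₀ (by norm_num) (by norm_num)
          linarith
        · have : (0 : ℝ) ≤ (1 / 2) ^ N := by positivity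
          linarith

lemma shift_sum {d : ℕ} {B C : Finset (Fin d → ℤ)} (x₀ : Fin d → ℤ) (F : (Fin d → ℤ) → ℝ)
    (hF : ∀ z ∉ B, F z = 0) (hBC : ∀ z ∈ B, z + x₀ ∈ C) :
    ∑ y ∈ C, F (y - x₀) = ∑ z ∈ B, F z := by
  rw [← sum_subset (s₁ := B.image (fun z => z + x₀)) (s₂ := C) (f := fun y => F (y - x₀))]
  · rw [sum_image (by intro a _ b _ h; simpa using h)]
    simp
  · intro y hy
    obtain ⟨z, hz, rfl⟩ := mem_image.1 hy
    exact hBC z hz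
  · intro y _ hy
    apply hF
    intro h
    exact hy (mem_image.2 ⟨y - x₀, h, by simp⟩)

lemma var_zeta {d : ℕ} {Ω : Type} [MeasurableSpace Ω] (S : GaussSetting d Ω) (L : ℕ) (hL : 2 ≤ L)
    (x₀ x : Fin d → ℤ) (hx : x ≠ x₀) (hv : ∀ h, S.v L h ≤ 1) :
    variance (S.zeta L x₀ x) S.P ≤ (1 - S.v L (x - x₀)) + (1 - S.v L (x₀ - x)) := by
  let cc : (Fin d → ℤ) → ℝ := fun y => if y = x then 1 else - S.v L (x - x₀)
  have hG := S.gaussian L hL {x, x₀} cc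
  have e : (fun ω => ∑ y ∈ ({x, x₀} : Finset (Fin d → ℤ)), cc y * S.ξ L ω y) = S.zeta L x₀ x := by
    funext ω
    rw [sum_pair hx]
    simp [cc, hx.symm, GaussSetting.zeta]; ring
  have hm : Measurable (S.zeta L x₀ x) := by
    unfold GaussSetting.zeta
    exact (S.meas L x).sub ((S.meas L x₀).mul_const _)
  rw [e] at hG
  have h1 : variance (S.zeta L x₀ x) S.P = variance id (Measure.map (S.zeta L x₀ x) S.P) := by
    rw [variance_map aemeasurable_id hm.aemeasurable]; rfl
  rw [h1, hG, variance_id_gaussianReal]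
  have hp := S.v_nonneg L (x - x₀)
  have hq := S.v_nonneg L (x₀ - x)
  have hp1 := hv (x - x₀)
  have hq1 := hv (x₀ - x)
  rw [Real.coe_toNNReal', sum_pair hx, sum_pair hx, sum_pair hx]
  simp only [cc, hx.symm, if_true, if_false, sub_self, S.v_zero]
  apply max_le <;> nlinarith

end Meso

end

noncomputable section

namespace Meso

lemma zeta_bound (n : ℕ) (hn : 1 ≤ n) (ε κ K c' a s h z f Va : ℝ) (hε : 0 < ε) (hε1 : ε ≤ 1)
    (hκ0 : 0 < κ) (hκ : κ < 1 / 3) (hc' : 0 < c') (ha : 0 < a) (hs : 0 ≤ s)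
    (hhn : h ≤ n) (hf0 : 0 ≤ f) (hf : f ≤ (K * ε) ^ n) (hVa0 : 0 ≤ Va)
    (hVa : Va ≤ 2 * Real.exp (c' * h) / (ε * a))
    (hz : |z| ≤ Real.sqrt Va * (ε⁻¹) ^ (κ * h) * Real.sqrt (max 1 (s * a)))
    (hb : K ^ 2 * Real.exp c' * ε ≤ 1 / 2) :
    (z * f) ^ 2 ≤ 4 * (K ^ 2 * Real.exp c') * (ε ^ (1 - 2 * κ) * s + 1 / a) * (1 / 2) ^ n := by
  obtain ⟨m, rfl⟩ : ∃ m, n = m + 1 := ⟨n - 1, by omega⟩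
  set E := (ε⁻¹) ^ κ with hE
  have hE0 : 0 < E := by positivity
  set w := ε ^ (1 - 2 * κ) with hw
  have hw0 : 0 < w := by positivity
  have hw1 : w ≤ 1 := Real.rpow_le_one hε.le hε1 (by linarith)
  have hEw : (ε * E) ^ 2 = ε * w := by
    rw [hE, hw, Real.inv_rpow hε.le, Real.rpow_sub hε, Real.rpow_one, mul_comm 2 κ,
      Real.rpow_mul hε.le]
    have : (ε ^ κ) ≠ 0 := by positivity
    have h2 : (ε ^ κ) ^ (2 : ℝ) = (ε ^ κ) ^ (2 : ℕ) := by norm_cast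
    rw [h2]
    field_simp
  have hP : (ε⁻¹) ^ (κ * h) ≤ E ^ (m + 1) := by
    rw [hE, ← Real.rpow_natCast, ← Real.rpow_mul (by positivity)]
    apply Real.rpow_le_rpow_of_exponent_le ((one_le_inv₀ hε).2 hε1)
    exact mul_le_mul_of_nonneg_left hhn hκ0.le
  have hP0 : 0 ≤ (ε⁻¹) ^ (κ * h) := by positivity
  have hexp : Real.exp (c' * h) ≤ Real.exp c' ^ (m + 1) := by
    rw [← Real.exp_nat_mul]
    apply Real.exp_le_exp.2
    nlinarith
  have hmax : max 1 (s * a) ≤ 1 + s * a := by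
    have : 0 ≤ s * a := by positivity
    apply max_le <;> linarith
  have hz2 : z ^ 2 ≤ Va * ((ε⁻¹) ^ (κ * h)) ^ 2 * max 1 (s * a) := by
    rw [← sq_abs]
    calc |z| ^ 2 ≤ (Real.sqrt Va * (ε⁻¹) ^ (κ * h) * Real.sqrt (max 1 (s * a))) ^ 2 :=
          pow_le_pow_left₀ (abs_nonneg _) hz 2
      _ = _ := by
          rw [mul_pow, mul_pow, Real.sq_sqrt hVa0, Real.sq_sqrt (le_max_of_le_left zero_le_one)]
  have hz3 : z ^ 2 ≤ (2 * Real.exp c' ^ (m + 1) / (ε * a)) * (E ^ (m + 1)) ^ 2 * (1 + s * a) := by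
    refine hz2.trans ?_
    have h1 : Va ≤ 2 * Real.exp c' ^ (m + 1) / (ε * a) := hVa.trans (by gcongr)
    gcongr
  have hf2 : f ^ 2 ≤ ((K * ε) ^ (m + 1)) ^ 2 := pow_le_pow_left₀ hf0 hf 2
  set b := K ^ 2 * Real.exp c' with hbdef
  have hb0 : 0 ≤ b := by positivity
  have ht : b * ε * w ≤ 1 / 2 := by
    have : b * ε * w ≤ b * ε * 1 := by gcongr
    linarith
  calc (z * f) ^ 2 = z ^ 2 * f ^ 2 := by ring
    _ ≤ ((2 * Real.exp c' ^ (m + 1) / (ε * a)) * (E ^ (m + 1)) ^ 2 * (1 + s * a))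
        * ((K * ε) ^ (m + 1)) ^ 2 := by gcongr
    _ = (2 / (ε * a)) * (1 + s * a) * (K ^ 2 * Real.exp c' * (ε * E) ^ 2) ^ (m + 1) := by
        have e : (K ^ 2 * Real.exp c' * (ε * E) ^ 2) ^ (m + 1)
          = Real.exp c' ^ (m + 1) * (E ^ (m + 1)) ^ 2 * ((K * ε) ^ (m + 1)) ^ 2 := by
          rw [← pow_mul, ← pow_mul, mul_comm (m + 1) 2, pow_mul, pow_mul, ← mul_pow, ← mul_pow]
          ring
        rw [e]; ring
    _ = (2 / (ε * a)) * (1 + s * a) * (b * ε * w) * (b * ε * w) ^ m := by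
        rw [hEw, pow_succ', ← hbdef]; ring
    _ ≤ (2 / (ε * a)) * (1 + s * a) * (b * ε * w) * (1 / 2) ^ m := by
        gcongr
    _ = 4 * b * (w * s + w / a) * (1 / 2) ^ (m + 1) := by
        field_simp; ring
    _ ≤ _ := by
        gcongr

lemma n1_gt {d : ℕ} {r : ℝ} {x : Fin d → ℤ} (h : x ∉ QBox d r) : r / 2 ≤ n1 x := by
  rw [mem_QBox] at h
  push Not at h
  obtain ⟨i, hi⟩ := h
  have h2 : (x i).natAbs ≤ n1 x :=
    single_le_sum (f := fun i => (x i).natAbs) (fun _ _ => Nat.zero_le _) (mem_univ i)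
  have h3 : ((x i).natAbs : ℝ) ≤ n1 x := by exact_mod_cast h2
  rw [Nat.cast_natAbs, Int.cast_abs] at h3
  linarith

/-- Spectral gap on the orthogonal complement of `psi`. -/
lemma gap {d : ℕ} (C : Finset (Fin d → ℤ)) (V psi : (Fin d → ℤ) → ℝ) (x₀ : Fin d → ℤ)
    (hx₀ : x₀ ∈ C) (G : ℝ) (hG : 0 < G) (hV : ∀ x ∈ C, x ≠ x₀ → V x ≤ V x₀ - G)
    (hpsi1 : ∑ x ∈ C, psi x ^ 2 = 1) (hpsi : ∑ x ∈ C.erase x₀, psi x ^ 2 ≤ 1 / 4)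
    (u : (Fin d → ℤ) → ℝ) (hu : ∑ x ∈ C, u x * psi x = 0) :
    ∑ x ∈ C, u x * op C V u x ≤ (V x₀ - 2 * G / 3) * ∑ x ∈ C, u x ^ 2 := by
  refine (op_quad C V u).trans ?_
  rw [← add_sum_erase _ _ hx₀] at hu hpsi1 ⊢
  rw [← add_sum_erase _ (fun x => u x ^ 2) hx₀]
  set A := ∑ x ∈ C.erase x₀, u x ^ 2 with hA
  set p := ∑ x ∈ C.erase x₀, psi x ^ 2 with hp
  have hA0 : 0 ≤ A := sum_nonneg fun _ _ => sq_nonneg _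
  have hCS := sum_mul_sq_le_sq_mul_sq (C.erase x₀) u psi
  rw [← hA, ← hp] at hCS
  have h1 : ∑ x ∈ C.erase x₀, u x * psi x = -(u x₀ * psi x₀) := by linarith
  rw [h1] at hCS
  have h2 : u x₀ ^ 2 * (1 - p) ≤ A * p := by
    have : psi x₀ ^ 2 = 1 - p := by linarith
    rw [← this]; nlinarith
  have h3 : u x₀ ^ 2 ≤ A / 3 := by nlinarith [sq_nonneg (u x₀)]
  have h4 : ∑ x ∈ C.erase x₀, V x * u x ^ 2 ≤ (V x₀ - G) * A := by
    rw [hA, mul_sum]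
    apply sum_le_sum
    intro x hx
    obtain ⟨hx1, hx2⟩ := mem_erase.1 hx
    exact mul_le_mul_of_nonneg_right (hV x hx2 hx1) (sq_nonneg _)
  nlinarith

lemma half_pow_le (n : ℕ) (a : ℝ) (ha : 0 < a) (h : a / 2 ≤ n) : (1 / 2 : ℝ) ^ n ≤ 2 / a := by
  have h1 : (n : ℝ) < 2 ^ n := by exact_mod_cast Nat.lt_two_pow_self
  rw [one_div, inv_pow, inv_le_comm₀ (by positivity) (by positivity), inv_div]
  linarith

set_option maxHeartbeats 4000000 in
lemma det {d : ℕ} (hd : 1 ≤ d) (a D c c' κ R r : ℝ) (v xi phi phiBar Va : (Fin d → ℤ) → ℝ)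
    (lam lamBar : ℝ) (x₀ : Fin d → ℤ)
    (hD : 1 ≤ D) (ha : 1 ≤ a) (hc : 0 < c) (hc' : 0 < c') (hκ0 : 0 < κ) (hκ : κ < 1 / 3)
    (hr : a ≤ r)
    (hv0 : v 0 = 1) (hvc : ∀ x, x ≠ 0 → v x ≤ 1 - c / D)
    (hVa0 : ∀ x, 0 ≤ Va x)
    (hVa : ∀ x, x ≠ x₀ → Va x ≤ 2 * Real.exp (c' * znorm (x - x₀)) / D)
    (hbar : IsPrincipalEigenpair (QBox d r) (fun x => -(a * (1 - v x))) lamBar phiBar)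
    (hprin : IsPrincipalEigenpair (QBox d R) xi lam phi)
    (hx₀ : x₀ ∈ QBox d (R - r))
    (hE1 : |xi x₀ - a| < 2 * (d : ℝ) + 1)
    (hE2 : ∀ x ∈ QBoxAt (2 * R) x₀, |xi x - xi x₀ * v (x - x₀)| ≤ a * (1 - v (x - x₀)) / 10)
    (hE3 : ∀ x ∈ QBoxAt R x₀, x ≠ x₀ → |xi x - xi x₀ * v (x - x₀)| ≤
      Real.sqrt (Va x) * (a / D) ^ (κ * znorm (x - x₀)) * Real.sqrt (max 1 (|xi x₀ - a| * a)))
    (s1 : D / a ≤ 1) (s2 : 2 * d / c * (D / a) ≤ 1 / 2)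
    (s3 : (2 * d / c) ^ 2 * Real.exp c' * (D / a) ≤ 1 / 2)
    (s4 : 5 * (2 * (d : ℝ) + 1) ≤ a)
    (s5 : 4 * (2 * d / c * (D / a)) * 3 ^ d ≤ 1 / 4)
    (s6 : 24 * d * (D / a) ≤ c) :
    let D0 : ℝ := 8 * ((2 * d / c) ^ 2 * Real.exp c') + 16 * d ^ 2 * (2 * d + 1) ^ 2 + 32 * d ^ 2
    let T : ℝ := (D / a) ^ (1 - 2 * κ) * |xi x₀ - a| + 1 / a
    |lam - lamBar - (xi x₀ + ∑ x ∈ (QBox d r).erase 0,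
        phiBar x ^ 2 * (xi (x + x₀) - xi x₀ * v (x + x₀ - x₀)))|
      ≤ (4 * d * (2 * d / c) * 3 ^ d * (2 * d + 1) + 12 * D0 * 3 ^ d / c) * (D / a) * T ∧
    ∑ x ∈ QBox d R, (phi x - phiBar (x - x₀)) ^ 2 ≤ 288 * D0 * 3 ^ d / c ^ 2 * (D / a) ^ 2 * T := by
  intro D0 T
  have ha0 : 0 < a := by linarith
  have hD0 : 0 < D := by linarith
  have hdR : (1 : ℝ) ≤ d := by exact_mod_cast hd
  set ε := D / a with hε
  have hε0 : 0 < ε := by positivity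
  set s := xi x₀ - a with hs
  set K := 2 * (d : ℝ) / c with hK
  have hK0 : 0 < K := by positivity
  set q := K * ε with hq
  have hq0 : 0 < q := by positivity
  have hT1 : 1 / a ≤ T := by
    have : 0 ≤ ε ^ (1 - 2 * κ) * |s| := by positivity
    simp only [T]; linarith
  have hT0 : 0 < T := lt_of_lt_of_le (by positivity) hT1
  set C := QBox d R with hC
  set B := QBox d r with hB
  -- geometry
  have hrR : r ≤ R := by
    have := mem_QBox.1 hx₀ ⟨0, hd⟩
    have := (abs_nonneg _).trans this
    linarith
  have hBC : ∀ z ∈ B, z + x₀ ∈ C := by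
    intro z hz
    rw [hC, mem_QBox]; intro i
    have h1 := mem_QBox.1 hz i
    have h2 := mem_QBox.1 hx₀ i
    have := abs_add_le (z i : ℝ) (x₀ i)
    simp only [Pi.add_apply]; push_cast
    linarith
  have h0B : (0 : Fin d → ℤ) ∈ B := by
    rw [hB, mem_QBox]; intro i; simp; linarith
  have hx₀C : x₀ ∈ C := by simpa using hBC 0 h0B
  have hC2 : ∀ x ∈ C, x ∈ QBoxAt (2 * R) x₀ := by
    intro x hx
    rw [mem_QBoxAt, mem_QBox]; intro i
    have h1 := mem_QBox.1 hx i
    have h2 := mem_QBox.1 hx₀ i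
    have := abs_sub (x i : ℝ) (x₀ i)
    simp only [Pi.sub_apply]; push_cast
    linarith
  have hB3 : ∀ x, x - x₀ ∈ B → x ∈ QBoxAt R x₀ := by
    intro x hx
    rw [mem_QBoxAt, mem_QBox]; intro i
    have h1 := mem_QBox.1 hx i
    linarith
  -- shape
  have hk0 : 0 < c / ε := by positivity
  have hS : ∀ x, x ≠ 0 → c / ε ≤ a * (1 - v x) := by
    intro x hx
    have := hvc x hx
    have e : c / ε = a * (c / D) := by rw [hε]; field_simp
    rw [e]
    apply mul_le_mul_of_nonneg_left _ ha0.le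
    linarith
  have hqk : 2 * (d : ℝ) / (c / ε) = q := by rw [hq, hK]; field_simp
  -- decay of phiBar
  have hlb : -(2 * (d : ℝ)) ≤ lamBar := by
    have := lam_ge hbar h0B
    simp [hv0] at this
    linarith
  obtain ⟨hbe, hb1, hb0, _⟩ := hbar
  have hdec : ∀ x, phiBar x ≤ q ^ n1 x := by
    intro x
    have := decay hk0 hbe hb0 hb1 hlb hS (n1 x) x le_rfl
    rwa [hqk] at this
  have hdecS : ∀ m x, n1 x = m + 1 → a * (1 - v x) * phiBar x ≤ 2 * d * q ^ m := by
    intro m x hx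
    have := decayS hk0 hbe hb0 hb1 hlb hS m x hx
    rwa [hqk] at this
  have hn1 : ∀ x : Fin d → ℤ, x ≠ 0 → ∃ m, n1 x = m + 1 := by
    intro x hx
    have : n1 x ≠ 0 := fun h => hx ((n1_eq_zero x).1 h)
    exact ⟨n1 x - 1, by omega⟩
  have hqm : ∀ m : ℕ, q ^ m ≤ (1 / 2) ^ m := fun m => pow_le_pow_left₀ hq0.le s2 m
  have hqm1 : ∀ m : ℕ, q ^ m ≤ 1 := fun m => pow_le_one₀ hq0.le (by linarith)
  let psi : (Fin d → ℤ) → ℝ := fun x => phiBar (x - x₀)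
  have hpsi1 : ∑ x ∈ C, psi x ^ 2 = 1 := by
    rw [← hb1]
    exact shift_sum x₀ (fun z => phiBar z ^ 2) (fun z hz => by simp [hbe.1 z hz]) hBC
  have hsumC : ∀ s : Finset (Fin d → ℤ), ∑ x ∈ s, (1 / 2 : ℝ) ^ n1 (x - x₀) ≤ 3 ^ d := by
    intro s
    have := half_pow_sum (s.image (fun x => x - x₀))
    rwa [sum_image (by intro a _ b _ h; simpa using h)] at this
  have hpsi4 : ∑ x ∈ C.erase x₀, psi x ^ 2 ≤ 1 / 4 := by
    calc ∑ x ∈ C.erase x₀, psi x ^ 2 ≤ ∑ x ∈ C.erase x₀, 4 * q * (1 / 2) ^ n1 (x - x₀) := by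
          apply sum_le_sum
          intro x hx
          obtain ⟨m, hm⟩ := hn1 (x - x₀) (sub_ne_zero.2 (mem_erase.1 hx).1)
          have h1 := hdec (x - x₀)
          have h0 := hb0 (x - x₀)
          rw [hm] at h1 ⊢
          have h2 : psi x ^ 2 ≤ (q ^ (m + 1)) ^ 2 := pow_le_pow_left₀ h0 h1 2
          refine h2.trans ?_
          have h3 := hqm m
          have h4 := hqm1 (m + 1)
          have h5 : 0 < q ^ (m + 1) := by positivity
          have h6 : q ^ (m + 1) ≤ q * (1 / 2) ^ m := by
            rw [pow_succ']; exact mul_le_mul_of_nonneg_left h3 hq0.le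
          have h7 : (1 / 2 : ℝ) ^ (m + 1) = (1 / 2) ^ m / 2 := by ring
          have h8 : 0 ≤ q * (1 / 2) ^ m := by positivity
          rw [h7]
          nlinarith
      _ = 4 * q * ∑ x ∈ C.erase x₀, (1 / 2) ^ n1 (x - x₀) := by rw [mul_sum]
      _ ≤ 4 * q * 3 ^ d := by
          apply mul_le_mul_of_nonneg_left (hsumC _) (by positivity)
      _ ≤ 1 / 4 := s5
  -- gap
  have hVgap : ∀ x ∈ C, x ≠ x₀ → xi x ≤ xi x₀ - c / (2 * ε) := by
    intro x hx hne
    have h1 := (abs_le.1 (hE2 x (hC2 x hx))).2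
    have h2 := hS (x - x₀) (sub_ne_zero.2 hne)
    have h3 : c / (2 * ε) = c / ε / 2 := by field_simp
    rw [h3]
    set S := a * (1 - v (x - x₀)) with hSd
    have h4 : -(1 / 5) * S ≤ s * (1 - v (x - x₀)) := by
      have hp : 0 ≤ 1 - v (x - x₀) := by
        have : 0 < S := lt_of_lt_of_le hk0 h2
        by_contra hcon
        push Not at hcon
        nlinarith
      have : -(a / 5) ≤ s := by
        have := (abs_lt.1 hE1).1
        linarith
      rw [hSd]
      nlinarith [mul_le_mul_of_nonneg_right this hp]
    have h5 : xi x - xi x₀ * v (x - x₀) = xi x - xi x₀ + S + s * (1 - v (x - x₀)) := by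
      rw [hSd, hs]; ring
    rw [h5] at h1
    linarith
  have hlam := lam_ge hprin hx₀C
  obtain ⟨⟨_, hpe⟩, hp1, hp0, _⟩ := hprin
  have hgap : ∀ u : (Fin d → ℤ) → ℝ, ∑ x ∈ C, u x * psi x = 0 →
      ∑ x ∈ C, u x * op C xi u x ≤ (lam - c / (12 * ε)) * ∑ x ∈ C, u x ^ 2 := by
    intro u hu
    refine (gap C xi psi x₀ hx₀C (c / (2 * ε)) (by positivity) hVgap hpsi1 hpsi4 u hu).trans ?_
    apply mul_le_mul_of_nonneg_right _ (sum_nonneg fun _ _ => sq_nonneg _)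
    have h1 : 2 * (d : ℝ) ≤ c / (12 * ε) := by
      rw [le_div_iff₀ (by positivity)]; linarith
    have h2 : 2 * (c / (2 * ε)) / 3 = 4 * (c / (12 * ε)) := by field_simp; norm_num
    rw [h2]
    have : 0 < c / (12 * ε) := by positivity
    linarith
  -- residual
  let rr : (Fin d → ℤ) → ℝ := fun x => op C xi psi x - (xi x₀ + lamBar) * psi x
  have hrr_in : ∀ x, x - x₀ ∈ B →
      rr x = (xi x - xi x₀ * v (x - x₀)) * phiBar (x - x₀)
        - s * ((1 - v (x - x₀)) * phiBar (x - x₀)) := by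
    intro x hx
    have h1 : (∑ y ∈ C, if Adj x y then psi y else 0)
        = ∑ z ∈ B, if Adj (x - x₀) z then phiBar z else 0 := by
      rw [← shift_sum x₀ (fun z => if Adj (x - x₀) z then phiBar z else 0)
        (fun z hz => by simp [hbe.1 z hz]) hBC]
      apply sum_congr rfl; intro y _
      simp only [adj_sub, psi]
    have h2 := hbe.2 _ hx
    simp only [rr, op]
    rw [h1]
    simp only [psi, hs]
    linear_combination h2
  have hrr_out : ∀ x, x - x₀ ∉ B → rr x = ∑ y ∈ C, if Adj x y then psi y else 0 := by
    intro x hx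
    have : psi x = 0 := hbe.1 _ hx
    simp only [rr, op, this]; ring
  have hD00 : 0 < D0 := by simp only [D0]; positivity
  have hrr : ∀ x ∈ C, rr x ^ 2 ≤ D0 * T * (1 / 2) ^ n1 (x - x₀) := by
    intro x hx
    by_cases hxB : x - x₀ ∈ B
    · rw [hrr_in x hxB]
      by_cases hxx : x = x₀
      · subst hxx
        simp [hv0]; positivity
      have hne := sub_ne_zero.2 hxx
      obtain ⟨m, hm⟩ := hn1 (x - x₀) hne
      have hz := hE3 x (hB3 x hxB) hxx
      have hVx := hVa x hxx
      rw [← inv_div D a, ← hε] at hz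
      have hDε : D = ε * a := by rw [hε]; field_simp
      rw [hDε] at hVx
      have hA := zeta_bound (n1 (x - x₀)) (by omega) ε κ K c' a |s| (znorm (x - x₀))
        _ (phiBar (x - x₀)) (Va x) hε0 s1 hκ0 hκ hc' ha0 (abs_nonneg _) (znorm_le_n1 _)
        (hb0 _) (hdec _) (hVa0 x) hVx hz s3
      have hBb : (s * ((1 - v (x - x₀)) * phiBar (x - x₀))) ^ 2
          ≤ 8 * d ^ 2 * (2 * d + 1) ^ 2 * (1 / a) * (1 / 2) ^ n1 (x - x₀) := by
        have h1 := hdecS m _ hm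
        have h0 := hb0 (x - x₀)
        have hSp : 0 ≤ a * (1 - v (x - x₀)) * phiBar (x - x₀) :=
          mul_nonneg (hk0.le.trans (hS _ hne)) h0
        have h2 : (a * (1 - v (x - x₀)) * phiBar (x - x₀)) ^ 2 ≤ (2 * d * q ^ m) ^ 2 :=
          pow_le_pow_left₀ hSp h1 2
        have h3 : (2 * d * q ^ m) ^ 2 ≤ 4 * d ^ 2 * (1 / 2) ^ m := by
          have := hqm m
          have h4 := hqm1 m
          have h5 : 0 < q ^ m := by positivity
          have h6 : q ^ m * q ^ m ≤ (1 / 2) ^ m := by nlinarith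
          have h7 : (2 * d * q ^ m) ^ 2 = 4 * d ^ 2 * (q ^ m * q ^ m) := by ring
          rw [h7]
          exact mul_le_mul_of_nonneg_left h6 (by positivity)
        have hs2 : s ^ 2 ≤ (2 * d + 1) ^ 2 := by
          rw [← sq_abs]; exact pow_le_pow_left₀ (abs_nonneg _) hE1.le 2
        have e : (s * ((1 - v (x - x₀)) * phiBar (x - x₀))) ^ 2
          = s ^ 2 * (1 / a) * (1 / a) * (a * (1 - v (x - x₀)) * phiBar (x - x₀)) ^ 2 := by
          field_simp
        rw [e, hm]
        have h1a : 1 / a ≤ 1 := by rw [div_le_one ha0]; exact ha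
        calc s ^ 2 * (1 / a) * (1 / a) * (a * (1 - v (x - x₀)) * phiBar (x - x₀)) ^ 2
            ≤ (2 * d + 1) ^ 2 * 1 * (1 / a) * (4 * d ^ 2 * (1 / 2) ^ m) := by
              gcongr
              exact h2.trans h3
          _ = _ := by ring
      set X := (xi x - xi x₀ * v (x - x₀)) * phiBar (x - x₀)
      set Y := s * ((1 - v (x - x₀)) * phiBar (x - x₀))
      have hXY : (X - Y) ^ 2 ≤ 2 * X ^ 2 + 2 * Y ^ 2 := by nlinarith [sq_nonneg (X + Y)]
      refine hXY.trans ?_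
      set p : ℝ := (1 / 2) ^ n1 (x - x₀)
      have hp : 0 < p := by positivity
      have hB2 : 8 * (d : ℝ) ^ 2 * (2 * d + 1) ^ 2 * (1 / a) * p
          ≤ 8 * (d : ℝ) ^ 2 * (2 * d + 1) ^ 2 * T * p := by gcongr
      have hA' : X ^ 2 ≤ 4 * (K ^ 2 * Real.exp c') * T * p := hA
      have hlast : 0 ≤ 32 * (d : ℝ) ^ 2 * T * p := by positivity
      have e : D0 * T * p = 2 * (4 * (K ^ 2 * Real.exp c') * T * p)
        + 2 * (8 * (d : ℝ) ^ 2 * (2 * d + 1) ^ 2 * T * p) + 32 * (d : ℝ) ^ 2 * T * p := by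
        simp only [D0]; ring
      rw [e]
      linarith
    · rw [hrr_out x hxB]
      have hne : x - x₀ ≠ 0 := fun h => hxB (h ▸ h0B)
      obtain ⟨m, hm⟩ := hn1 (x - x₀) hne
      have hfar := n1_gt hxB
      have hhalf := half_pow_le (n1 (x - x₀)) a ha0 (by linarith)
      have h1 := nsum_le C x psi ((1 / 2) ^ m) (by positivity) (by
        intro y hy
        have hy' : Adj (x - x₀) (y - x₀) := (adj_sub x y x₀).2 hy
        have := n1_adj hy'
        calc psi y ≤ q ^ n1 (y - x₀) := hdec _
          _ ≤ (1 / 2) ^ n1 (y - x₀) := hqm _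
          _ ≤ (1 / 2) ^ m := pow_le_pow_of_le_one (by norm_num) (by norm_num) (by omega))
      have h0 : 0 ≤ ∑ y ∈ C, if Adj x y then psi y else 0 :=
        sum_nonneg fun y _ => by split_ifs <;> simp [psi, hb0]
      have h2 := pow_le_pow_left₀ h0 h1 2
      refine h2.trans ?_
      set p : ℝ := (1 / 2) ^ n1 (x - x₀) with hp
      have hp0 : 0 < p := by positivity
      have hpm : (1 / 2 : ℝ) ^ m = 2 * p := by rw [hp, hm]; ring
      rw [hpm]
      have h3 : (2 * (d : ℝ) * (2 * p)) ^ 2 = 16 * d ^ 2 * p * p := by ring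
      rw [h3]
      have h4 : 16 * (d : ℝ) ^ 2 * p * p ≤ 16 * d ^ 2 * (2 / a) * p := by gcongr
      have h5 : 16 * (d : ℝ) ^ 2 * (2 / a) * p = 32 * d ^ 2 * (1 / a) * p := by ring
      have h6 : 32 * (d : ℝ) ^ 2 * (1 / a) * p ≤ D0 * T * p := by
        gcongr
        simp only [D0]
        have : 0 ≤ 8 * (K ^ 2 * Real.exp c') + 16 * (d : ℝ) ^ 2 * (2 * d + 1) ^ 2 := by positivity
        linarith
      linarith
  have hRR : ∑ x ∈ C, rr x ^ 2 ≤ D0 * T * 3 ^ d := by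
    calc ∑ x ∈ C, rr x ^ 2 ≤ ∑ x ∈ C, D0 * T * (1 / 2) ^ n1 (x - x₀) := sum_le_sum hrr
      _ = D0 * T * ∑ x ∈ C, (1 / 2) ^ n1 (x - x₀) := by rw [mul_sum]
      _ ≤ _ := mul_le_mul_of_nonneg_left (hsumC _) (by positivity)
  have hcore := core C xi phi psi rr lam (xi x₀ + lamBar) (c / (12 * ε)) hpe hp1 hp0 hpsi1
    (fun x => hb0 _) (fun x _ => by simp only [rr]; ring) (by positivity) hgap
  obtain ⟨hc1, hc2⟩ := hcore
  -- first order term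
  set PhiS := ∑ x ∈ B.erase 0, phiBar x ^ 2 * (xi (x + x₀) - xi x₀ * v (x + x₀ - x₀)) with hPhiS
  set Q := ∑ x ∈ B, (1 - v x) * phiBar x ^ 2 with hQ
  have hfirst : ∑ x ∈ C, rr x * psi x = PhiS - s * Q := by
    let F : (Fin d → ℤ) → ℝ := fun z =>
      phiBar z ^ 2 * (xi (z + x₀) - xi x₀ * v (z + x₀ - x₀)) - s * ((1 - v z) * phiBar z ^ 2)
    have h1 : ∑ x ∈ C, rr x * psi x = ∑ x ∈ C, F (x - x₀) := by
      apply sum_congr rfl; intro x _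
      by_cases hxB : x - x₀ ∈ B
      · rw [hrr_in x hxB]; simp only [F, psi, sub_add_cancel]; ring
      · simp only [F, psi, hbe.1 _ hxB]; ring
    rw [h1, shift_sum x₀ F (fun z hz => by simp [F, hbe.1 z hz]) hBC]
    simp only [F]
    rw [sum_sub_distrib, ← mul_sum, ← add_sum_erase _ _ h0B]
    simp [hv0, hPhiS, hQ]
  have hQb : |a * Q| ≤ 4 * d * q * 3 ^ d := by
    have hterm : ∀ x ∈ B, 0 ≤ a * ((1 - v x) * phiBar x ^ 2) ∧
        a * ((1 - v x) * phiBar x ^ 2) ≤ 4 * d * q * (1 / 2) ^ n1 x := by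
      intro x _
      by_cases hx0 : x = 0
      · subst hx0; simp [hv0]; positivity
      obtain ⟨m, hm⟩ := hn1 x hx0
      have h0 := hb0 x
      have hSp := hk0.le.trans (hS x hx0)
      have e : a * ((1 - v x) * phiBar x ^ 2) = (a * (1 - v x) * phiBar x) * phiBar x := by ring
      rw [e]
      refine ⟨by positivity, ?_⟩
      have h1 := hdecS m x hm
      have h2 := hdec x
      rw [hm] at h2 ⊢
      calc (a * (1 - v x) * phiBar x) * phiBar x ≤ (2 * d * q ^ m) * q ^ (m + 1) := by gcongr
        _ = 2 * d * q * q ^ m * q ^ m := by ring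
        _ ≤ 2 * d * q * (1 / 2) ^ m * 1 := by
            gcongr
            exact hqm1 m
        _ = _ := by ring
    rw [hQ, mul_sum, abs_of_nonneg (sum_nonneg fun x hx => (hterm x hx).1)]
    calc _ ≤ ∑ x ∈ B, 4 * d * q * (1 / 2) ^ n1 x := sum_le_sum fun x hx => (hterm x hx).2
      _ = 4 * d * q * ∑ x ∈ B, (1 / 2) ^ n1 x := by rw [mul_sum]
      _ ≤ _ := mul_le_mul_of_nonneg_left (half_pow_sum _) (by positivity)
  have hsQ : |s * Q| ≤ (2 * d + 1) * (4 * d * q * 3 ^ d) * T := by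
    have e : s * Q = s * (a * Q) * (1 / a) := by field_simp
    rw [e, abs_mul, abs_mul, abs_of_pos (by positivity : 0 < 1 / a)]
    gcongr
  constructor
  · rw [hfirst] at hc1
    have e : lam - lamBar - (xi x₀ + PhiS) = (lam - (xi x₀ + lamBar) - (PhiS - s * Q)) - s * Q := by
      ring
    rw [e]
    refine (abs_sub _ _).trans ?_
    have h1 : (∑ x ∈ C, rr x ^ 2) / (c / (12 * ε)) ≤ D0 * T * 3 ^ d / (c / (12 * ε)) := by
      gcongr
    have h2 : D0 * T * 3 ^ d / (c / (12 * ε)) = (12 * D0 * 3 ^ d / c) * ε * T := by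
      field_simp
    have h3 : (2 * d + 1) * (4 * d * q * 3 ^ d) * T
      = (4 * d * K * 3 ^ d * (2 * d + 1)) * ε * T := by rw [hq]; ring
    rw [add_mul, add_mul]
    linarith
  · refine hc2.trans ?_
    have h1 : 2 * (∑ x ∈ C, rr x ^ 2) / (c / (12 * ε)) ^ 2
        ≤ 2 * (D0 * T * 3 ^ d) / (c / (12 * ε)) ^ 2 := by gcongr
    refine h1.trans (le_of_eq ?_)
    field_simp
    norm_num

end Meso

end

/-- Theorem 4.1 / Theorem 4.2: approximation of the principal
eigenpair on the event `E_{L,x₀}(κ)`.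
There are `C > 0` and `L₀ ≥ 1` such that for all `L ≥ L₀` and `x₀ ∈ Q_{R_L − r_L}`, on
`E_{L,x₀}(κ)`:
`|λ₁(Q_{R_L},ξ_L) − λ̄_L − Ξ_L(x₀)| ≤ C (d_L/a_L)((d_L/a_L)^{1−2κ}|ξ_L(x₀)−a_L| + 1/a_L)`
and `‖φ_{R_L} − φ̄_L(·−x₀)‖_{ℓ²(Q_{R_L})}
  ≤ C (d_L/a_L) √((d_L/a_L)^{1−2κ}|ξ_L(x₀)−a_L| + 1/a_L)`. -/
theorem mesoscopic_eigenpair_approximation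
    {d : ℕ} (hd : 1 ≤ d) {Ω : Type} [MeasurableSpace Ω] (S : GaussSetting d Ω)
    (c c' : ℝ) (hSR : S.ShortRangeDecay c c')
    (hLR : S.LongRangeDecay)
    (hA1 : S.Assumption1)
    (M : MesoData S)
    (κ : ℝ) (hκ : 0 < κ ∧ κ < 1 / 3)
    -- `(lam1 L ω, phi1 L ω)` is the principal Dirichlet eigenpair of `Δ + ξ_L` on `Q_{R_L}`
    (lam1 : ℕ → Ω → ℝ) (phi1 : ℕ → Ω → (Fin d → ℤ) → ℝ)
    (hprin : ∀ L : ℕ, 2 ≤ L → ∀ ω,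
      IsPrincipalEigenpair (QBox d (M.RL L)) (S.ξ L ω) (lam1 L ω) (phi1 L ω)) :
    ∃ C > (0 : ℝ), ∃ L₀ : ℕ, 1 ≤ L₀ ∧ ∀ L : ℕ, L₀ ≤ L →
      ∀ x₀ ∈ QBox d (M.RL L - M.rL L), ∀ ω ∈ EventE S M.RL κ L x₀,
      (|lam1 L ω - M.lamBar L - (S.ξ L ω x₀ + S.Phi M.rL M.phiBar L x₀ ω)|
        ≤ C * (S.dL L / S.aL L) *
            ((S.dL L / S.aL L) ^ ((1 : ℝ) - 2 * κ) * |S.ξ L ω x₀ - S.aL L|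
              + 1 / S.aL L)) ∧
      (Real.sqrt (∑ x ∈ QBox d (M.RL L), (phi1 L ω x - M.phiBar L (x - x₀)) ^ 2)
        ≤ C * (S.dL L / S.aL L) *
            Real.sqrt ((S.dL L / S.aL L) ^ ((1 : ℝ) - 2 * κ) * |S.ξ L ω x₀ - S.aL L|
              + 1 / S.aL L)) := by
  obtain ⟨hc, hc', hSR⟩ := hSR
  obtain ⟨hκ0, hκ1⟩ := hκ
  set D0 : ℝ := 8 * ((2 * d / c) ^ 2 * Real.exp c') + 16 * d ^ 2 * (2 * d + 1) ^ 2 + 32 * d ^ 2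
    with hD0
  set C1 : ℝ := 4 * d * (2 * d / c) * 3 ^ d * (2 * d + 1) + 12 * D0 * 3 ^ d / c with hC1
  set C2 : ℝ := 288 * D0 * 3 ^ d / c ^ 2 with hC2
  have hD00 : 0 ≤ D0 := by positivity
  have hC10 : 0 ≤ C1 := by positivity
  have hC20 : 0 ≤ C2 := by positivity
  have hsmall : ∀ A B : ℝ, 0 < B → ∀ᶠ L : ℕ in atTop, A * (S.dL L / S.aL L) ≤ B := by
    intro A B hB
    have h : Tendsto (fun L => A * (S.dL L / S.aL L)) atTop (nhds (A * 0)) := hA1.const_mul A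
    rw [mul_zero] at h
    exact (h.eventually (gt_mem_nhds hB)).mono fun L h => h.le
  have hev := ((hsmall 1 1 one_pos).and ((hsmall (2 * d / c) (1 / 2) (by norm_num)).and
    ((hsmall ((2 * d / c) ^ 2 * Real.exp c') (1 / 2) (by norm_num)).and
    ((hsmall (5 * (2 * (d : ℝ) + 1)) 1 one_pos).and
    ((hsmall (4 * (2 * d / c) * 3 ^ d) (1 / 4) (by norm_num)).and
    ((hsmall (24 * d) c hc).and (eventually_ge_atTop 2)))))))
  obtain ⟨L₀, hL₀⟩ := eventually_atTop.1 hev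
  refine ⟨C1 + C2 + 1, by positivity, max L₀ 1, le_max_right _ _, ?_⟩
  intro L hL x₀ hx₀ ω hω
  obtain ⟨s1, s2, s3, s4, s5, s6, hL2⟩ := hL₀ L ((le_max_left _ _).trans hL)
  have ha0 := S.aL_pos L hL2
  have hdp := S.dL_pos L hL2
  have hd1 : 1 ≤ S.dL L := by
    obtain ⟨y, _, hy⟩ := (S.dL_def L hL2).1
    have h0 := S.v_nonneg L y
    rw [← hy] at h0
    have : 1 / S.dL L ≤ 1 := by linarith
    rwa [div_le_one hdp] at this
  have h4 : 5 * (2 * (d : ℝ) + 1) ≤ S.aL L := by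
    rw [mul_div_assoc', div_le_one ha0] at s4
    have : (0 : ℝ) ≤ d := by positivity
    nlinarith
  have ha1 : 1 < S.aL L := by
    have : (0 : ℝ) ≤ d := by positivity
    linarith
  have hr : S.aL L ≤ M.rL L := by
    have hpr := M.principal L hL2
    have hr0 : 0 ≤ M.rL L := by
      by_contra hneg
      push Not at hneg
      have hem : QBox d (M.rL L) = ∅ := by
        apply Finset.eq_empty_of_forall_notMem
        intro x hx
        have := (abs_nonneg _).trans (Meso.mem_QBox.1 hx ⟨0, hd⟩)
        linarith
      have := hpr.2.1
      rw [hem] at this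
      simp at this
    have hlog := M.rL_lower L hL2
    have hlp := Real.log_pos ha1
    have hrp : 0 < M.rL L := by
      rcases hr0.eq_or_lt with h | h
      · rw [← h, Real.log_zero] at hlog; linarith
      · exact h
    exact (Real.log_le_log_iff ha0 hrp).1 hlog
  have hv1 : ∀ h, S.v L h ≤ 1 := by
    intro h
    by_cases h0 : h = 0
    · rw [h0, S.v_zero]
    · have := (hSR L hL2 h h0).2
      have : 0 < c / S.dL L := by positivity
      linarith
  have hVa : ∀ x, x ≠ x₀ → variance (S.zeta L x₀ x) S.P
      ≤ 2 * Real.exp (c' * znorm (x - x₀)) / S.dL L := by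
    intro x hx
    have h1 := Meso.var_zeta S L hL2 x₀ x hx hv1
    have h2 := (hSR L hL2 (x - x₀) (sub_ne_zero.2 hx)).1
    have h3 := (hSR L hL2 (x₀ - x) (sub_ne_zero.2 hx.symm)).1
    have h5 : znorm (x₀ - x) = znorm (x - x₀) := by
      unfold znorm
      congr 1
      apply sum_congr rfl; intro i _
      simp only [Pi.sub_apply]; push_cast; ring
    rw [h5] at h3
    rw [mul_div_assoc]
    linarith
  obtain ⟨⟨hE1, hE2⟩, hE3⟩ := hω
  have hdet := Meso.det hd (S.aL L) (S.dL L) c c' κ (M.RL L) (M.rL L) (S.v L) (S.ξ L ω)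
    (phi1 L ω) (M.phiBar L) (fun x => variance (S.zeta L x₀ x) S.P) (lam1 L ω) (M.lamBar L) x₀
    hd1 ha1.le hc hc' hκ0 hκ1 hr (S.v_zero L) (fun x hx => (hSR L hL2 x hx).2)
    (fun x => variance_nonneg _ _) hVa (M.principal L hL2) (hprin L hL2 ω) hx₀ hE1 hE2 hE3
    (by linarith) s2 s3 h4 (by linarith) s6
  obtain ⟨h1, h2⟩ := hdet
  rw [← hD0] at h1 h2
  set ε := S.dL L / S.aL L with hε
  have hε0 : 0 < ε := by positivity
  set T := ε ^ ((1 : ℝ) - 2 * κ) * |S.ξ L ω x₀ - S.aL L| + 1 / S.aL L with hT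
  have hT0 : 0 < T := by positivity
  constructor
  · rw [← hC1] at h1
    refine h1.trans ?_
    have : C1 ≤ C1 + C2 + 1 := by linarith
    gcongr
  · apply Real.sqrt_le_iff.2
    refine ⟨by positivity, h2.trans ?_⟩
    rw [← hC2, mul_pow, mul_pow, Real.sq_sqrt hT0.le]
    gcongr
    nlinarith
end

section
/- (Spectral gap.) There exist a constant C_gap > 0 and an integer L₀ > 1 such that for all L ≥ L₀ and all x₀ ∈ Q_{R_L − r_L}, on the event E¹_{L,x₀} ∩ E²_{L,x₀}, the second largest eigenvalue of Δ + ξ_L on Q_{R_L} with Dirichlet boundary conditions satisfies λ₂(Q_{R_L}, ξ_L) ≤ ξ_L(x₀) − C_gap · a_L/d_L. -/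
open MeasureTheory ProbabilityTheory Filter Finset

theorem aux_card_nbr {d : ℕ} (C : Finset (Fin d → ℤ)) (x : Fin d → ℤ) :
    (C.filter (fun y => Adj x y)).card ≤ 2 * d := by
  classical
  have hsub : C.filter (fun y => Adj x y) ⊆
      ((Finset.univ : Finset (Fin d)) ×ˢ ({1, -1} : Finset ℤ)).image
        (fun p => Function.update x p.1 (x p.1 + p.2)) := by
    intro y hy
    have hA : (∑ i, |x i - y i|) = 1 := (Finset.mem_filter.mp hy).2
    have hex : ∃ i, x i - y i ≠ 0 := by
      by_contra hcon
      push Not at hcon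
      simp [hcon] at hA
    obtain ⟨i, hi⟩ := hex
    have hsplit := Finset.add_sum_erase Finset.univ (fun i => |x i - y i|) (Finset.mem_univ i)
    have hnn : 0 ≤ ∑ j ∈ Finset.univ.erase i, |x j - y j| :=
      Finset.sum_nonneg (fun j _ => abs_nonneg _)
    have hpos : 1 ≤ |x i - y i| := Int.one_le_abs hi
    have h0 : ∑ j ∈ Finset.univ.erase i, |x j - y j| = 0 := by omega
    have h1 : |x i - y i| = 1 := by omega
    have hz := (Finset.sum_eq_zero_iff_of_nonneg (fun j _ => abs_nonneg (x j - y j))).mp h0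
    refine Finset.mem_image.mpr ⟨(i, y i - x i), ?_, ?_⟩
    · simp only [Finset.mem_product, Finset.mem_univ, true_and, Finset.mem_insert,
        Finset.mem_singleton]
      rcases abs_eq (by norm_num : (0:ℤ) ≤ 1) |>.mp h1 with h | h <;> omega
    · funext j
      by_cases hj : j = i
      · subst hj; simp
      · have := hz j (Finset.mem_erase.mpr ⟨hj, Finset.mem_univ _⟩)
        have := abs_eq_zero.mp this
        simp only [Function.update_of_ne hj]
        omega
  calc _ ≤ _ := Finset.card_le_card hsub
    _ ≤ _ := Finset.card_image_le
    _ ≤ _ := by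
      rw [Finset.card_product]
      simp [mul_comm]

theorem aux_adj_symm {d : ℕ} (x y : Fin d → ℤ) : Adj x y ↔ Adj y x := by
  unfold Adj
  simp only [abs_sub_comm]

theorem aux_lap {d : ℕ} (C : Finset (Fin d → ℤ)) (f : (Fin d → ℤ) → ℝ) :
    ∑ x ∈ C, f x * (∑ y ∈ C, if Adj x y then f y else 0) ≤ 2 * (d : ℝ) * ∑ x ∈ C, f x ^ 2 := by
  have h1 : ∑ x ∈ C, f x * (∑ y ∈ C, if Adj x y then f y else 0) ≤
      ∑ x ∈ C, ∑ y ∈ C, ((if Adj x y then f x ^ 2 / 2 else 0) +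
        (if Adj x y then f y ^ 2 / 2 else 0)) := by
    refine Finset.sum_le_sum fun x _ => ?_
    rw [Finset.mul_sum]
    refine Finset.sum_le_sum fun y _ => ?_
    split_ifs
    · nlinarith [sq_nonneg (f x - f y)]
    · simp
  have h2 : ∑ x ∈ C, ∑ y ∈ C, (if Adj x y then f y ^ 2 / 2 else 0) =
      ∑ x ∈ C, ∑ y ∈ C, (if Adj x y then f x ^ 2 / 2 else 0) := by
    rw [Finset.sum_comm]
    refine Finset.sum_congr rfl fun x _ => Finset.sum_congr rfl fun y _ => ?_
    simp only [aux_adj_symm y x]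
  have h3 : ∑ x ∈ C, ∑ y ∈ C, (if Adj x y then f x ^ 2 / 2 else 0) ≤
      ∑ x ∈ C, (d : ℝ) * f x ^ 2 := by
    refine Finset.sum_le_sum fun x _ => ?_
    rw [← Finset.sum_filter, Finset.sum_const, nsmul_eq_mul]
    have h := aux_card_nbr C x
    have h' : ((C.filter (fun y => Adj x y)).card : ℝ) ≤ 2 * d := by exact_mod_cast h
    nlinarith [sq_nonneg (f x)]
  simp only [Finset.sum_add_distrib] at h1
  rw [h2] at h1
  rw [← Finset.mul_sum] at h3
  linarith

theorem aux_gap {d : ℕ} (C : Finset (Fin d → ℤ)) (V : (Fin d → ℤ) → ℝ)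
    (lam : ℕ → ℝ) (phi : ℕ → (Fin d → ℤ) → ℝ) (hb : IsDirichletEigenbasis C V lam phi)
    (hC : 1 < C.card) (x₀ : Fin d → ℤ) (m : ℝ) (hm : ∀ x ∈ C, x ≠ x₀ → V x ≤ m) :
    lam 1 ≤ m := by
  obtain ⟨he, hmono, horth⟩ := hb
  have h0 : 0 < C.card := by omega
  have hpq : ∃ p q : ℝ, 0 < p ^ 2 + q ^ 2 ∧ p * phi 0 x₀ + q * phi 1 x₀ = 0 := by
    by_cases h : phi 0 x₀ = 0
    · exact ⟨1, 0, by norm_num, by simp [h]⟩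
    · exact ⟨phi 1 x₀, -phi 0 x₀, by nlinarith [sq_nonneg (phi 1 x₀), pow_pos (abs_pos.mpr h) 2, sq_abs (phi 0 x₀)], by ring⟩
  obtain ⟨p, q, hpos, hz⟩ := hpq
  have o00 : ∑ x ∈ C, phi 0 x * phi 0 x = 1 := by simpa using horth 0 h0 0 h0
  have o01 : ∑ x ∈ C, phi 0 x * phi 1 x = 0 := by simpa using horth 0 h0 1 hC
  have o11 : ∑ x ∈ C, phi 1 x * phi 1 x = 1 := by simpa using horth 1 hC 1 hC
  have hl := hmono 0 h0 1 hC (by norm_num)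
  set f : (Fin d → ℤ) → ℝ := fun x => p * phi 0 x + q * phi 1 x with hf
  have hff : ∑ x ∈ C, f x ^ 2 = p ^ 2 + q ^ 2 := by
    have : ∀ x, f x ^ 2 = p ^ 2 * (phi 0 x * phi 0 x) + 2 * p * q * (phi 0 x * phi 1 x)
        + q ^ 2 * (phi 1 x * phi 1 x) := fun x => by simp only [hf]; ring
    simp only [this, Finset.sum_add_distrib, ← Finset.mul_sum, o00, o01, o11]
    ring
  have hHf : ∀ x ∈ C, (∑ y ∈ C, if Adj x y then f y else 0) =
      p * (lam 0 * phi 0 x) + q * (lam 1 * phi 1 x) + 2 * (d : ℝ) * f x - V x * f x := by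
    intro x hx
    have e0 := (he 0 h0).2 x hx
    have e1 := (he 1 hC).2 x hx
    have : (∑ y ∈ C, if Adj x y then f y else 0) =
        p * (∑ y ∈ C, if Adj x y then phi 0 y else 0) +
        q * (∑ y ∈ C, if Adj x y then phi 1 y else 0) := by
      rw [Finset.mul_sum, Finset.mul_sum, ← Finset.sum_add_distrib]
      refine Finset.sum_congr rfl fun y _ => ?_
      split_ifs <;> simp [hf]
    rw [this, ← e0, ← e1]
    simp only [hf]
    ring
  have hlap := aux_lap C f
  have hsum : ∑ x ∈ C, f x * (∑ y ∈ C, if Adj x y then f y else 0) =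
      p ^ 2 * lam 0 + q ^ 2 * lam 1 + 2 * (d : ℝ) * (∑ x ∈ C, f x ^ 2)
        - ∑ x ∈ C, V x * f x ^ 2 := by
    have : ∀ x ∈ C, f x * (∑ y ∈ C, if Adj x y then f y else 0) =
        p ^ 2 * lam 0 * (phi 0 x * phi 0 x) + p * q * (lam 0 + lam 1) * (phi 0 x * phi 1 x)
        + q ^ 2 * lam 1 * (phi 1 x * phi 1 x) + 2 * (d : ℝ) * f x ^ 2 - V x * f x ^ 2 := by
      intro x hx
      rw [hHf x hx]
      simp only [hf]
      ring
    rw [Finset.sum_congr rfl this]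
    simp only [Finset.sum_add_distrib, Finset.sum_sub_distrib, ← Finset.mul_sum, o00, o01, o11]
    ring
  have hV : ∑ x ∈ C, V x * f x ^ 2 ≤ m * ∑ x ∈ C, f x ^ 2 := by
    rw [Finset.mul_sum]
    refine Finset.sum_le_sum fun x hx => ?_
    by_cases hxx : x = x₀
    · have : f x = 0 := by rw [hxx]; exact hz
      simp [this]
    · exact mul_le_mul_of_nonneg_right (hm x hx hxx) (sq_nonneg _)
  rw [hff] at *
  have hp := mul_le_mul_of_nonneg_left hl (sq_nonneg p)
  by_contra hcon
  push Not at hcon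
  nlinarith

theorem aux_mem_QBox {d : ℕ} {a : ℝ} {x : Fin d → ℤ} :
    x ∈ QBox d a ↔ ∀ i, -(a / 2) ≤ (x i : ℝ) ∧ (x i : ℝ) ≤ a / 2 := by
  unfold QBox
  simp only [Finset.mem_Icc, Pi.le_def, Int.ceil_le, Int.le_floor]
  exact forall_and.symm

/-- Proposition 4.6, spectral gap.
There are `C_gap > 0` and `L₀ > 1` such that for all `L ≥ L₀` and all
`x₀ ∈ Q_{R_L − r_L}`, on the event `E¹_{L,x₀} ∩ E²_{L,x₀}`, the second largest Dirichlet
eigenvalue of `Δ + ξ_L` on `Q_{R_L}` satisfies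
`λ₂(Q_{R_L}, ξ_L) ≤ ξ_L(x₀) − C_gap · a_L/d_L`. -/
theorem spectral_gap
    {d : ℕ} (hd : 1 ≤ d) {Ω : Type} [MeasurableSpace Ω] (S : GaussSetting d Ω)
    (c c' : ℝ) (hSR : S.ShortRangeDecay c c')
    (hLR : S.LongRangeDecay)
    (hA1 : S.Assumption1)
    (M : MesoData S)
    -- `(lam L k ω, phi L k ω)` enumerate the Dirichlet eigenpairs of `Δ + ξ_L` on
    -- `Q_{R_L}` in nonincreasing order of the eigenvalues; in particular `lam L 1 ω`
    -- is the second largest eigenvalue `λ₂(Q_{R_L}, ξ_L)`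
    (lam : ℕ → ℕ → Ω → ℝ) (phi : ℕ → ℕ → Ω → (Fin d → ℤ) → ℝ)
    (hbasis : ∀ L : ℕ, 2 ≤ L → ∀ ω, IsDirichletEigenbasis (QBox d (M.RL L)) (S.ξ L ω)
      (fun k => lam L k ω) (fun k => phi L k ω)) :
    ∃ Cgap > (0 : ℝ), ∃ L₀ : ℕ, 1 < L₀ ∧ ∀ L : ℕ, L₀ ≤ L →
      ∀ x₀ ∈ QBox d (M.RL L - M.rL L),
      ∀ ω ∈ EventE1 S L x₀ ∩ EventE2 S M.RL L x₀,
        lam L 1 ω ≤ S.ξ L ω x₀ - Cgap * (S.aL L / S.dL L) := by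
  obtain ⟨hc, -, hII⟩ := hSR
  refine ⟨c / 2, by positivity, ?_⟩
  have hev : ∀ᶠ L : ℕ in atTop, S.dL L / S.aL L < 1 / (3 * (2 * (d : ℝ) + 1)) :=
    hA1.eventually_lt_const (by positivity)
  obtain ⟨L₁, hL₁⟩ := eventually_atTop.mp hev
  refine ⟨max L₁ 2, by simp, ?_⟩
  intro L hL x₀ hx₀ ω hω
  have hL2 : 2 ≤ L := le_trans (le_max_right _ _) hL
  have hsmall := hL₁ L (le_trans (le_max_left _ _) hL)
  have ha := S.aL_pos L hL2
  have hdp := S.dL_pos L hL2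
  obtain ⟨⟨e, -, hev⟩, -⟩ := S.dL_def L hL2
  have hd1 : 1 ≤ S.dL L := by
    have h1 : 1 / S.dL L ≤ 1 := by linarith [S.v_nonneg L e]
    rwa [div_le_one hdp] at h1
  have hdR : (1 : ℝ) ≤ d := by exact_mod_cast hd
  have haL : 3 * (2 * (d : ℝ) + 1) < S.aL L := by
    rw [div_lt_div_iff₀ ha (by positivity)] at hsmall
    nlinarith
  -- the mesoscopic radius
  have hr0 : 0 ≤ M.rL L := by
    by_contra hneg
    push Not at hneg
    have hemp : QBox d (M.rL L) = ∅ := by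
      refine Finset.eq_empty_of_forall_notMem fun x hx => ?_
      have := aux_mem_QBox.mp hx ⟨0, hd⟩
      linarith [this.1, this.2]
    have hp := (M.principal L hL2).2.1
    rw [hemp] at hp
    simp at hp
  have hra : S.aL L ≤ M.rL L := by
    have hlog := M.rL_lower L hL2
    have hlp : 0 < Real.log (S.aL L) := Real.log_pos (by linarith)
    have hrp : 0 < M.rL L := by
      rcases hr0.lt_or_eq with h | h
      · exact h
      · rw [← h, Real.log_zero] at hlog
        linarith
    exact (Real.log_le_log_iff ha hrp).mp hlog
  have hx₀' := aux_mem_QBox.mp hx₀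
  have hR : M.rL L ≤ M.RL L := by
    have := hx₀' ⟨0, hd⟩
    linarith [this.1, this.2]
  have hcard : 1 < (QBox d (M.RL L)).card := by
    refine Finset.one_lt_card.mpr ⟨0, ?_, fun _ => 1, ?_, ?_⟩
    · refine aux_mem_QBox.mpr fun i => ?_
      simp only [Pi.zero_apply, Int.cast_zero]
      constructor <;> linarith
    · refine aux_mem_QBox.mpr fun i => ?_
      simp only [Int.cast_one]
      constructor <;> linarith
    · intro h
      have := congrFun h ⟨0, hd⟩
      simp at this
  obtain ⟨hE1, hE2⟩ := hω
  have hE1' : |S.ξ L ω x₀ - S.aL L| < 2 * (d : ℝ) + 1 := hE1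
  have hlow := (abs_lt.mp hE1').1
  refine aux_gap _ _ (fun k => lam L k ω) _ (hbasis L hL2 ω) hcard x₀ _ ?_
  intro x hx hne
  have hx' := aux_mem_QBox.mp hx
  have hmem : x ∈ QBoxAt (2 * M.RL L) x₀ := by
    refine Finset.mem_image.mpr ⟨x - x₀, aux_mem_QBox.mpr fun i => ?_, by abel⟩
    have h1 := hx' i
    have h2 := hx₀' i
    simp only [Pi.sub_apply, Int.cast_sub]
    constructor <;> linarith [h1.1, h1.2, h2.1, h2.2]
  have hz := (abs_le.mp (hE2 x hmem)).2
  have hv := (hII L hL2 (x - x₀) (sub_ne_zero.mpr hne)).2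
  unfold GaussSetting.zeta GaussSetting.shape at hz
  have hcd : 0 < c / S.dL L := by positivity
  have hw : c / S.dL L ≤ 1 - S.v L (x - x₀) := by linarith
  have heq : c / 2 * (S.aL L / S.dL L) = (c / S.dL L) * (S.aL L / 2) := by ring
  rw [heq]
  have hkey : (c / S.dL L) * (S.aL L / 2) ≤
      (1 - S.v L (x - x₀)) * (S.ξ L ω x₀ - S.aL L / 10) :=
    mul_le_mul hw (by linarith) (by linarith) (by linarith)
  nlinarith
end
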